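/- arXiv:1205.4281 — 2 statements merged into one kernel-verified Lean document; each statement's English description precedes it below -/
import Mathlib

section
/- Suppose a > 0, the L¹-condition ∫₁^∞ |N(x) − a·x| / x² dx < ∞ holds, and there is a constant C such that |N(x) − a·x| ≤ C·x / log x for all x ≥ 2. Then there is a constant B such that ψ(x) ≤ B·x for all x ≥ 1 (equivalently, limsup_{u→∞} e^{−u} ψ(e^u) < ∞). -/
open MeasureTheory Real Filter Complex

/-- The generalized integer attached to an exponent vector `α`: `n(α) = ∏ k, (p k)^(α k)`. -/
noncomputable def beurlingInt (p : ℕ → ℝ) (α : ℕ →₀ ℕ) : ℝ :=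
  α.prod fun k e => (p k) ^ e

/-- Counting function of generalized integers: `N(x) = #{α : n(α) < x}`. -/
noncomputable def beurlingN (p : ℕ → ℝ) (x : ℝ) : ℕ :=
  Set.ncard {α : ℕ →₀ ℕ | beurlingInt p α < x}

/-- Chebyshev function `ψ(x) = ∑_{k, m ≥ 1, (p k)^m < x} log (p k)`. -/
noncomputable def beurlingPsi (p : ℕ → ℝ) (x : ℝ) : ℝ :=
  ∑' q : {q : ℕ × ℕ // 1 ≤ q.2 ∧ (p q.1) ^ q.2 < x}, Real.log (p (q : ℕ × ℕ).1)

/-!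
In logarithmic scale the hypotheses say that `R(u) = exp (-u) * N(exp u) - a` is integrable over
`(0, ∞)` and satisfies `(1 + u) * |R(u)| ≤ C`, after enlarging the constant. Fix a kernel `φ`
decaying like `exp (-l|v|)`, such as `1 / cosh (l * v)`. For `l ≤ 1` the function
`P(h) = ∑ Λ(n) / n * φ (h - log n)`, summed over prime powers `n`, dominates `ψ(exp h) / exp h`, so
it suffices to bound `P` for one small `l`.

The identity `log n = ∑ Λ(d)`, the sum running over the prime powers `d ∣ n`, gives
`∑ log n / n * φ' (h - log n) = ∑ Λ(d) / d * ∑ φ' (h - log d - log m) / m`.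
By Abel summation against `R`, the left side is at most `(a + 2 * l * C) * ∫ φ`, while the inner
sum on the right is `a * φ (h - log d)` up to an error of order `l`. Hence
`a * P(h) ≤ O(1) + l * (a + 2 * ∫ |R|) * sup P`, the supremum being over `(-∞, h]`, and for small
`l` the last term is absorbed by the left side.
-/

/-- A `C²` two-sided exponential kernel `φ` of rate `l`: it is comparable to `exp (-l|v|)`, and its
first two derivatives are dominated by `l * φ`, so that they become negligible against `φ` as the
rate `l` tends to `0`. -/
structure IsSlowKernel (l : ℝ) (φ : ℝ → ℝ) : Prop where
  rate_pos : 0 < l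
  contDiff : ContDiff ℝ 2 φ
  abs_deriv_le : ∀ v, |deriv φ v| ≤ l * φ v
  abs_deriv_deriv_le : ∀ v, |deriv (deriv φ) v| ≤ l * φ v
  exp_le : ∀ v, Real.exp (-(l * |v|)) ≤ φ v
  le_exp : ∀ v, φ v ≤ 2 * Real.exp (-(l * |v|))

lemma hasDerivAt_inv_cosh_mul (l v : ℝ) :
    HasDerivAt (fun v => (Real.cosh (l * v))⁻¹)
      (-l * Real.sinh (l * v) / Real.cosh (l * v) ^ 2) v := by
  refine (((hasDerivAt_id v).const_mul l).cosh.inv (Real.cosh_pos _).ne').congr_deriv ?_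
  simp only [id_eq, mul_one]
  ring

lemma hasDerivAt_sinh_mul_div_cosh_mul_sq (l v : ℝ) :
    HasDerivAt (fun v => -l * Real.sinh (l * v) / Real.cosh (l * v) ^ 2)
      (l ^ 2 * (Real.sinh (l * v) ^ 2 - 1) / Real.cosh (l * v) ^ 3) v := by
  have hc : Real.cosh (l * v) ≠ 0 := (Real.cosh_pos _).ne'
  have hid := (hasDerivAt_id v).const_mul l
  refine ((hid.sinh.const_mul (-l)).div (hid.cosh.pow 2) (pow_ne_zero 2 hc)).congr_deriv ?_
  have hsq : Real.cosh (l * v) ^ 2 = Real.sinh (l * v) ^ 2 + 1 := Real.cosh_sq _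
  simp only [id_eq, mul_one, Pi.pow_apply]
  field_simp
  simp only [Nat.cast_ofNat, Nat.add_one_sub_one, pow_one]
  linear_combination (-l ^ 2 * Real.cosh (l * v)) * hsq

lemma isSlowKernel_inv_cosh_mul {l : ℝ} (hl0 : 0 < l) (hl1 : l ≤ 1) :
    IsSlowKernel l fun v => (Real.cosh (l * v))⁻¹ := by
  have hc (v : ℝ) : 0 < Real.cosh (l * v) := Real.cosh_pos _
  have hsq (v : ℝ) : Real.cosh (l * v) ^ 2 = Real.sinh (l * v) ^ 2 + 1 := Real.cosh_sq _
  have hcosh (v : ℝ) : Real.cosh (l * v) =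
      (Real.exp (l * |v|) + Real.exp (-(l * |v|))) / 2 := by
    rw [← Real.cosh_eq, ← Real.cosh_abs, abs_mul, abs_of_pos hl0]
  have hderiv : deriv (fun v => (Real.cosh (l * v))⁻¹) =
      fun v => -l * Real.sinh (l * v) / Real.cosh (l * v) ^ 2 :=
    funext fun v => (hasDerivAt_inv_cosh_mul l v).deriv
  refine ⟨hl0, ?_, fun v => ?_, fun v => ?_, fun v => ?_, fun v => ?_⟩
  · exact ContDiff.inv (Real.contDiff_cosh.comp (by fun_prop)) fun v => (hc v).ne'
  · have hs : |Real.sinh (l * v)| ≤ Real.cosh (l * v) :=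
      abs_le_of_sq_le_sq (by linarith [hsq v]) (hc v).le
    rw [hderiv, abs_div, abs_mul, abs_neg, abs_of_pos hl0, abs_of_pos (pow_pos (hc v) 2)]
    calc l * |Real.sinh (l * v)| / Real.cosh (l * v) ^ 2
        ≤ l * Real.cosh (l * v) / Real.cosh (l * v) ^ 2 := by gcongr
      _ = l * (Real.cosh (l * v))⁻¹ := by field [(hc v).ne']
  · have hs : |Real.sinh (l * v) ^ 2 - 1| ≤ Real.cosh (l * v) ^ 2 := by
      rw [abs_le, hsq]
      constructor <;> nlinarith only [sq_nonneg (Real.sinh (l * v))]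
    rw [hderiv, (hasDerivAt_sinh_mul_div_cosh_mul_sq l v).deriv, abs_div, abs_mul,
      abs_of_pos (pow_pos hl0 2), abs_of_pos (pow_pos (hc v) 3)]
    calc l ^ 2 * |Real.sinh (l * v) ^ 2 - 1| / Real.cosh (l * v) ^ 3
        ≤ l * Real.cosh (l * v) ^ 2 / Real.cosh (l * v) ^ 3 := by
          gcongr
          exact pow_le_of_le_one hl0.le hl1 two_ne_zero
      _ = l * (Real.cosh (l * v))⁻¹ := by field [(hc v).ne']
  · have hle : Real.exp (-(l * |v|)) ≤ Real.exp (l * |v|) :=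
      Real.exp_le_exp.2 (neg_le_self (by positivity))
    rw [Real.exp_neg (l * |v|)] at hle ⊢
    gcongr
    rw [hcosh, Real.exp_neg]
    linarith
  · have hpos : 0 < Real.exp (-(l * |v|)) := Real.exp_pos _
    rw [inv_le_iff_one_le_mul₀ (hc v), hcosh]
    have hmul : Real.exp (-(l * |v|)) * Real.exp (l * |v|) = 1 := by rw [← Real.exp_add]; simp
    nlinarith only [hmul, hpos]

lemma integrable_one_add_abs_mul_exp_neg_mul_abs {l : ℝ} (hl : 0 < l) :
    Integrable fun v : ℝ => (1 + |v|) * Real.exp (-(l * |v|)) := by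
  have h0 := integrableOn_rpow_mul_exp_neg_mul_rpow (s := 0) (by norm_num) one_pos hl
  have h1 := integrableOn_rpow_mul_exp_neg_mul_rpow (s := 1) (by norm_num) one_pos hl
  refine (integrable_fun_norm_addHaar volume
    (f := fun r : ℝ => (1 + r) * Real.exp (-(l * r)))).2 ?_
  refine (h0.add h1).congr_fun (fun r _ => ?_) measurableSet_Ioi
  simp [add_mul]

namespace IsSlowKernel

variable {l : ℝ} {φ : ℝ → ℝ}

lemma pos (hφ : IsSlowKernel l φ) (v : ℝ) : 0 < φ v :=
  (Real.exp_pos _).trans_le (hφ.exp_le v)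

lemma contDiff_deriv (hφ : IsSlowKernel l φ) : ContDiff ℝ 1 (deriv φ) :=
  hφ.contDiff.deriv'

lemma hasDerivAt_comp_sub (hφ : IsSlowKernel l φ) (y u : ℝ) :
    HasDerivAt (fun u => φ (y - u)) (-deriv φ (y - u)) u :=
  ((hφ.contDiff.differentiable two_ne_zero _).hasDerivAt).comp_const_sub y u

lemma hasDerivAt_deriv_comp_sub (hφ : IsSlowKernel l φ) (y u : ℝ) :
    HasDerivAt (fun u => deriv φ (y - u)) (-deriv (deriv φ) (y - u)) u :=
  ((hφ.contDiff_deriv.differentiable one_ne_zero _).hasDerivAt).comp_const_sub y u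

lemma hasDerivAt_mul_comp_sub (hφ : IsSlowKernel l φ) (y u : ℝ) :
    HasDerivAt (fun u => u * φ (y - u)) (φ (y - u) - u * deriv φ (y - u)) u :=
  ((hasDerivAt_id u).mul (hφ.hasDerivAt_comp_sub y u)).congr_deriv (by simp only [id_eq]; ring)

lemma hasDerivAt_mul_deriv_comp_sub (hφ : IsSlowKernel l φ) (y u : ℝ) :
    HasDerivAt (fun u => u * deriv φ (y - u))
      (deriv φ (y - u) - u * deriv (deriv φ) (y - u)) u :=
  ((hasDerivAt_id u).mul (hφ.hasDerivAt_deriv_comp_sub y u)).congr_deriv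
    (by simp only [id_eq]; ring)

lemma abs_mul_deriv_sub_le (hφ : IsSlowKernel l φ) {u : ℝ} (hu : 0 ≤ u) (v : ℝ) :
    |u * deriv φ v - (deriv φ v - u * deriv (deriv φ) v)| ≤ 2 * l * ((1 + u) * φ v) := by
  obtain ⟨h1, h1'⟩ := abs_le.1 (hφ.abs_deriv_le v)
  obtain ⟨h2, h2'⟩ := abs_le.1 (hφ.abs_deriv_deriv_le v)
  have := mul_nonneg hφ.rate_pos.le (hφ.pos v).le
  rw [abs_le]
  constructor <;> nlinarith

lemma le_mul_of_le (hφ : IsSlowKernel l φ) {h H x : ℝ} (hh : h ≤ H) (hx : 0 ≤ x) :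
    φ (h - x) ≤ 2 * Real.exp (l * (H + |H|)) * φ (H - x) := by
  have hl := hφ.rate_pos.le
  calc φ (h - x) ≤ 2 * Real.exp (-(l * |h - x|)) := hφ.le_exp _
    _ ≤ 2 * Real.exp (l * (H + |H|) + -(l * |H - x|)) := by
        have habs : |H - x| ≤ |H| + x := (abs_sub _ _).trans_eq (by rw [abs_of_nonneg hx])
        gcongr
        nlinarith only [neg_abs_le (h - x), habs, hl, hh]
    _ = 2 * Real.exp (l * (H + |H|)) * Real.exp (-(l * |H - x|)) := by
        rw [Real.exp_add, mul_assoc]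
    _ ≤ 2 * Real.exp (l * (H + |H|)) * φ (H - x) := by
        gcongr
        exact hφ.exp_le _

lemma integrable_one_add_abs_mul (hφ : IsSlowKernel l φ) :
    Integrable fun v => (1 + |v|) * φ v := by
  refine ((integrable_one_add_abs_mul_exp_neg_mul_abs hφ.rate_pos).const_mul 2).mono'
    (Continuous.aestronglyMeasurable (by have := hφ.contDiff.continuous; fun_prop))
    (.of_forall fun v => ?_)
  rw [Real.norm_of_nonneg (mul_nonneg (by positivity) (hφ.pos v).le)]
  calc (1 + |v|) * φ v ≤ (1 + |v|) * (2 * Real.exp (-(l * |v|))) := by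
        gcongr
        exact hφ.le_exp v
    _ = 2 * ((1 + |v|) * Real.exp (-(l * |v|))) := by ring

lemma integrable_comp_sub_of_abs_le (hφ : IsSlowKernel l φ) {g : ℝ → ℝ} (hg : Continuous g)
    {c : ℝ} (hle : ∀ v, |g v| ≤ c * φ v) (y : ℝ) : Integrable fun u => g (y - u) := by
  refine Integrable.comp_sub_left ?_ y
  refine (hφ.integrable_one_add_abs_mul.const_mul c).mono' hg.aestronglyMeasurable
    (.of_forall fun v => (hle v).trans ?_)
  have hc : 0 ≤ c := nonneg_of_mul_nonneg_left ((abs_nonneg _).trans (hle v)) (hφ.pos v)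
  gcongr
  exact le_mul_of_one_le_left (hφ.pos v).le (le_add_of_nonneg_right (abs_nonneg v))

lemma integrable_mul_comp_sub_of_abs_le (hφ : IsSlowKernel l φ) {g : ℝ → ℝ} (hg : Continuous g)
    {c : ℝ} (hle : ∀ v, |g v| ≤ c * φ v) (y : ℝ) : Integrable fun u => u * g (y - u) := by
  have hid : Integrable fun v => v * g v := by
    refine (hφ.integrable_one_add_abs_mul.const_mul c).mono'
      (continuous_id.mul hg).aestronglyMeasurable (.of_forall fun v => ?_)
    calc ‖v * g v‖ = |v| * |g v| := norm_mul _ _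
      _ ≤ (1 + |v|) * (c * φ v) := by
          gcongr
          · exact le_add_of_nonneg_left zero_le_one
          · exact hle v
      _ = c * ((1 + |v|) * φ v) := mul_left_comm _ _ _
  refine (((hφ.integrable_comp_sub_of_abs_le hg hle y).const_mul y).sub
    (hid.comp_sub_left y)).congr (.of_forall fun u => ?_)
  simp only [Pi.sub_apply]
  ring

lemma abs_le_one_mul (hφ : IsSlowKernel l φ) (v : ℝ) : |φ v| ≤ 1 * φ v :=
  (one_mul (φ v)).symm ▸ (abs_of_pos (hφ.pos v)).le

lemma continuous_deriv_deriv (hφ : IsSlowKernel l φ) : Continuous (deriv (deriv φ)) :=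
  hφ.contDiff_deriv.continuous_deriv_one

lemma integrable_comp_sub (hφ : IsSlowKernel l φ) (y : ℝ) : Integrable fun u => φ (y - u) :=
  hφ.integrable_comp_sub_of_abs_le hφ.contDiff.continuous hφ.abs_le_one_mul y

lemma integrable_mul_comp_sub (hφ : IsSlowKernel l φ) (y : ℝ) :
    Integrable fun u => u * φ (y - u) :=
  hφ.integrable_mul_comp_sub_of_abs_le hφ.contDiff.continuous hφ.abs_le_one_mul y

lemma integrable_deriv_comp_sub (hφ : IsSlowKernel l φ) (y : ℝ) :
    Integrable fun u => deriv φ (y - u) :=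
  hφ.integrable_comp_sub_of_abs_le hφ.contDiff_deriv.continuous hφ.abs_deriv_le y

lemma integrable_mul_deriv_comp_sub (hφ : IsSlowKernel l φ) (y : ℝ) :
    Integrable fun u => u * deriv φ (y - u) :=
  hφ.integrable_mul_comp_sub_of_abs_le hφ.contDiff_deriv.continuous hφ.abs_deriv_le y

lemma integrable_deriv_deriv_comp_sub (hφ : IsSlowKernel l φ) (y : ℝ) :
    Integrable fun u => deriv (deriv φ) (y - u) :=
  hφ.integrable_comp_sub_of_abs_le hφ.continuous_deriv_deriv hφ.abs_deriv_deriv_le y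

lemma integrable_mul_deriv_deriv_comp_sub (hφ : IsSlowKernel l φ) (y : ℝ) :
    Integrable fun u => u * deriv (deriv φ) (y - u) :=
  hφ.integrable_mul_comp_sub_of_abs_le hφ.continuous_deriv_deriv hφ.abs_deriv_deriv_le y

end IsSlowKernel

/-- The number of indices `i` with `L i < u`, as a real number; the junk value is `0` when there are
infinitely many. -/
noncomputable def countLT {ι : Type*} (L : ι → ℝ) (u : ℝ) : ℝ :=
  {i | L i < u}.ncard

/-- The normalised remainder `R(u) = exp (-u) * countLT L u - a`; when `L` lists the logarithms of
generalized integers, `exp u * R u = N(exp u) - a * exp u`. -/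
noncomputable def remainder {ι : Type*} (L : ι → ℝ) (a u : ℝ) : ℝ :=
  Real.exp (-u) * countLT L u - a

section Counting

variable {ι : Type*} {L : ι → ℝ}

lemma countLT_nonneg (L : ι → ℝ) (u : ℝ) : 0 ≤ countLT L u := Nat.cast_nonneg _

lemma monotone_countLT (hfin : ∀ u, {i | L i < u}.Finite) : Monotone (countLT L) := by
  intro u v huv
  exact Nat.cast_le.2 (Set.ncard_le_ncard (fun i (hi : L i < u) => hi.trans_le huv) (hfin v))

lemma measurable_remainder (hfin : ∀ u, {i | L i < u}.Finite) (a : ℝ) :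
    Measurable (remainder L a) :=
  ((Real.measurable_exp.comp measurable_neg).mul (monotone_countLT hfin).measurable).sub_const a

lemma abs_remainder_le_of_one_add_mul_le {a C : ℝ}
    (hR : ∀ u, 0 < u → (1 + u) * |remainder L a u| ≤ C) (u : ℝ) (hu : 0 < u) :
    |remainder L a u| ≤ C :=
  (le_mul_of_one_le_left (abs_nonneg _) (by linarith)).trans (hR u hu)

lemma hasSum_indicator_Ioi (hfin : ∀ u, {i | L i < u}.Finite) (f : ℝ → ℝ) (u : ℝ) :
    HasSum (fun i => (Set.Ioi (L i)).indicator f u) (countLT L u * f u) := by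
  have hsupp : ∀ i ∉ (hfin u).toFinset, (Set.Ioi (L i)).indicator f u = 0 := fun i hi =>
    Set.indicator_of_notMem (by simpa using hi) f
  have hsum : ∑ i ∈ (hfin u).toFinset, (Set.Ioi (L i)).indicator f u = countLT L u * f u := by
    rw [Finset.sum_congr rfl fun i hi =>
      Set.indicator_of_mem (show u ∈ Set.Ioi (L i) by simpa using hi) f]
    rw [Finset.sum_const, nsmul_eq_mul, countLT, Set.ncard_eq_toFinset_card _ (hfin u)]
  exact hsum ▸ hasSum_sum_of_ne_finset_zero hsupp

/-- Abel summation: write each `F (L i)` as `-∫ u in Ioi (L i), F' u` and exchange the sum and the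
integral. -/
lemma hasSum_eq_integral_deriv_mul_countLT [Countable ι] {b : ℝ} (hL : ∀ i, b ≤ L i)
    (hfin : ∀ u, {i | L i < u}.Finite) {F F' : ℝ → ℝ} (hF : ∀ u, HasDerivAt F (F' u) u)
    (hlim : Tendsto F atTop (nhds 0)) (hF' : IntegrableOn F' (Set.Ioi b))
    (hcount : IntegrableOn (fun u => countLT L u * F' u) (Set.Ioi b)) :
    HasSum (fun i => F (L i)) (-∫ u in Set.Ioi b, countLT L u * F' u) := by
  set G : ι → ℝ → ℝ := fun i => (Set.Ioi (L i)).indicator F' with hG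
  have hGint (i : ι) : IntegrableOn (G i) (Set.Ioi b) := hF'.indicator measurableSet_Ioi
  have hGval (i : ι) : ∫ u in Set.Ioi b, G i u = -F (L i) := by
    rw [hG, setIntegral_indicator measurableSet_Ioi,
      Set.inter_eq_right.2 (Set.Ioi_subset_Ioi (hL i)),
      integral_Ioi_of_hasDerivAt_of_tendsto' (fun u _ => hF u)
        (hF'.mono_set (Set.Ioi_subset_Ioi (hL i))) hlim, zero_sub]
  have hGnorm (u : ℝ) : HasSum (fun i => ‖G i u‖) (countLT L u * ‖F' u‖) := by
    simpa only [hG, norm_indicator_eq_indicator_norm]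
      using hasSum_indicator_Ioi hfin (fun u => ‖F' u‖) u
  have hsum : Summable fun i => ∫ u in Set.Ioi b, ‖G i u‖ := by
    refine summable_of_sum_le (c := ∫ u in Set.Ioi b, ‖countLT L u * F' u‖)
      (fun i => integral_nonneg fun u => norm_nonneg _) fun s => ?_
    rw [← integral_finsetSum _ fun i _ => (hGint i).norm]
    refine integral_mono (integrable_finsetSum _ fun i _ => (hGint i).norm) hcount.norm fun u => ?_
    rw [norm_mul, Real.norm_of_nonneg (countLT_nonneg L u)]
    exact sum_le_hasSum s (fun i _ => norm_nonneg _) (hGnorm u)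
  have hswap := (hasSum_integral_of_summable_integral_norm hGint hsum).neg
  simp only [hGval, neg_neg] at hswap
  simpa only [hG, (hasSum_indicator_Ioi hfin F' _).tsum_eq] using hswap

lemma integrableOn_mul_remainder (hfin : ∀ u, {i | L i < u}.Finite) {a C : ℝ}
    (hR : ∀ u, 0 < u → |remainder L a u| ≤ C) {K : ℝ → ℝ} (hK : IntegrableOn K (Set.Ioi 0)) :
    IntegrableOn (fun u => K u * remainder L a u) (Set.Ioi 0) :=
  hK.mul_bdd (measurable_remainder hfin a).aestronglyMeasurable
    (ae_restrict_of_forall_mem measurableSet_Ioi hR)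

lemma setIntegral_Ioi_deriv_eq_neg {F F' : ℝ → ℝ} {b : ℝ} (hF : ∀ u, HasDerivAt F (F' u) u)
    (hFi : IntegrableOn F (Set.Ioi b)) (hFi' : IntegrableOn F' (Set.Ioi b)) :
    ∫ u in Set.Ioi b, F' u = -F b := by
  rw [integral_Ioi_of_hasDerivAt_of_tendsto' (fun u _ => hF u) hFi'
    (tendsto_zero_of_hasDerivAt_of_integrableOn_Ioi (fun u _ => hF u) hFi' hFi), zero_sub]

lemma hasSum_exp_neg_mul [Countable ι] (hL : ∀ i, 0 ≤ L i) (hfin : ∀ u, {i | L i < u}.Finite)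
    {a C : ℝ} (hR : ∀ u, 0 < u → |remainder L a u| ≤ C) {K K' : ℝ → ℝ}
    (hK : ∀ u, HasDerivAt K (K' u) u) (hKi : IntegrableOn K (Set.Ioi 0))
    (hKi' : IntegrableOn K' (Set.Ioi 0)) :
    HasSum (fun i => Real.exp (-L i) * K (L i))
      (a * ((∫ u in Set.Ioi 0, K u) + K 0) +
        ∫ u in Set.Ioi 0, (K u - K' u) * remainder L a u) := by
  have hKlim : Tendsto K atTop (nhds 0) :=
    tendsto_zero_of_hasDerivAt_of_integrableOn_Ioi (fun u _ => hK u) hKi' hKi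
  have hKR : IntegrableOn (fun u => (K u - K' u) * remainder L a u) (Set.Ioi 0) :=
    integrableOn_mul_remainder hfin hR (hKi.sub hKi')
  have hF (u : ℝ) : HasDerivAt (fun u => Real.exp (-u) * K u)
      (Real.exp (-u) * (K' u - K u)) u :=
    ((hasDerivAt_neg u).exp.mul (hK u)).congr_deriv (by ring)
  have hFlim : Tendsto (fun u => Real.exp (-u) * K u) atTop (nhds 0) := by
    simpa using (Real.tendsto_exp_neg_atTop_nhds_zero).mul hKlim
  have hF' : IntegrableOn (fun u => Real.exp (-u) * (K' u - K u)) (Set.Ioi 0) :=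
    (hKi'.sub hKi).bdd_mul (by fun_prop) (c := 1)
      (ae_restrict_of_forall_mem measurableSet_Ioi fun u (hu : 0 < u) => by
        rw [Real.norm_of_nonneg (Real.exp_pos _).le, Real.exp_le_one_iff]
        linarith)
  have hsplit (u : ℝ) : countLT L u * (Real.exp (-u) * (K' u - K u)) =
      -(a * (K u - K' u) + (K u - K' u) * remainder L a u) := by
    rw [remainder]
    ring
  have hmain : IntegrableOn (fun u => a * (K u - K' u)) (Set.Ioi 0) := (hKi.sub hKi').const_mul a
  have habel := hasSum_eq_integral_deriv_mul_countLT hL hfin hF hFlim hF'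
    (by simp only [hsplit]; exact (hmain.add hKR).neg)
  simp only [hsplit] at habel
  rwa [integral_neg, neg_neg, integral_add hmain hKR, integral_const_mul, integral_sub hKi hKi',
    setIntegral_Ioi_deriv_eq_neg hK hKi hKi', sub_neg_eq_add] at habel

end Counting

section Smoothing

variable {ι : Type*} {L : ι → ℝ} {a C l : ℝ} {φ : ℝ → ℝ}

lemma IsSlowKernel.integrableOn_mul_abs_remainder (hφ : IsSlowKernel l φ)
    (hfin : ∀ u, {i | L i < u}.Finite) (hR : ∀ u, 0 < u → |remainder L a u| ≤ C) (y : ℝ) :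
    IntegrableOn (fun u => φ (y - u) * |remainder L a u|) (Set.Ioi 0) := by
  refine (integrableOn_mul_remainder hfin hR
    (hφ.integrable_comp_sub y).integrableOn).norm.congr (.of_forall fun u => ?_)
  simp only [norm_mul, Real.norm_of_nonneg (hφ.pos (y - u)).le, Real.norm_eq_abs]

lemma IsSlowKernel.hasSum_exp_neg_mul_deriv [Countable ι] (hφ : IsSlowKernel l φ)
    (hL : ∀ i, 0 ≤ L i) (hfin : ∀ u, {i | L i < u}.Finite)
    (hR : ∀ u, 0 < u → |remainder L a u| ≤ C) (y : ℝ) :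
    HasSum (fun i => Real.exp (-L i) * deriv φ (y - L i))
      (a * (φ y + deriv φ y) +
        ∫ u in Set.Ioi 0, (deriv φ (y - u) + deriv (deriv φ) (y - u)) * remainder L a u) := by
  have hi := hφ.integrable_comp_sub y
  have hi' := hφ.integrable_deriv_comp_sub y
  have hi'' := hφ.integrable_deriv_deriv_comp_sub y
  have hFTC : ∫ u in Set.Ioi 0, -deriv φ (y - u) = -φ y := by
    simpa only [sub_zero] using setIntegral_Ioi_deriv_eq_neg (hφ.hasDerivAt_comp_sub y)
      hi.integrableOn (b := 0) hi'.neg.integrableOn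
  have hsum := hasSum_exp_neg_mul hL hfin hR (hφ.hasDerivAt_deriv_comp_sub y) hi'.integrableOn
    hi''.neg.integrableOn
  rw [integral_neg, neg_inj] at hFTC
  simpa only [hFTC, sub_zero, sub_neg_eq_add, Pi.neg_apply] using hsum

lemma IsSlowKernel.mul_le_tsum_exp_neg_mul_deriv [Countable ι] (hφ : IsSlowKernel l φ)
    (hL : ∀ i, 0 ≤ L i) (hfin : ∀ u, {i | L i < u}.Finite) (ha : 0 ≤ a)
    (hR : ∀ u, 0 < u → |remainder L a u| ≤ C) (y : ℝ) :
    a * φ y ≤ ∑' i, Real.exp (-L i) * deriv φ (y - L i) +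
      l * (a * φ y + 2 * ∫ u in Set.Ioi 0, φ (y - u) * |remainder L a u|) := by
  rw [(hφ.hasSum_exp_neg_mul_deriv hL hfin hR y).tsum_eq]
  have herr : |∫ u in Set.Ioi 0,
        (deriv φ (y - u) + deriv (deriv φ) (y - u)) * remainder L a u| ≤
      2 * l * ∫ u in Set.Ioi 0, φ (y - u) * |remainder L a u| := by
    rw [← integral_const_mul, ← Real.norm_eq_abs]
    refine norm_integral_le_of_norm_le
      ((hφ.integrableOn_mul_abs_remainder hfin hR y).const_mul _) (.of_forall fun u => ?_)
    rw [Real.norm_eq_abs, abs_mul, ← mul_assoc]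
    gcongr
    linarith [abs_add_le (deriv φ (y - u)) (deriv (deriv φ) (y - u)), hφ.abs_deriv_le (y - u),
      hφ.abs_deriv_deriv_le (y - u)]
  have hboundary : a * -(l * φ y) ≤ a * deriv φ y := by
    gcongr
    exact neg_le_of_abs_le (hφ.abs_deriv_le y)
  linarith [neg_le_of_abs_le herr]

lemma IsSlowKernel.hasSum_mul_exp_neg_mul_deriv [Countable ι] (hφ : IsSlowKernel l φ)
    (hL : ∀ i, 0 ≤ L i) (hfin : ∀ u, {i | L i < u}.Finite)
    (hR : ∀ u, 0 < u → |remainder L a u| ≤ C) (h : ℝ) :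
    HasSum (fun i => L i * (Real.exp (-L i) * deriv φ (h - L i)))
      (a * (∫ u in Set.Ioi 0, φ (h - u)) + ∫ u in Set.Ioi 0,
        (u * deriv φ (h - u) - (deriv φ (h - u) - u * deriv (deriv φ) (h - u))) *
          remainder L a u) := by
  have hi := hφ.integrable_comp_sub h
  have hui := hφ.integrable_mul_comp_sub h
  have hi' := hφ.integrable_deriv_comp_sub h
  have hui' := hφ.integrable_mul_deriv_comp_sub h
  have hui'' := hφ.integrable_mul_deriv_deriv_comp_sub h
  have hparts : ∫ u in Set.Ioi 0, u * deriv φ (h - u) = ∫ u in Set.Ioi 0, φ (h - u) := by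
    have hFTC := setIntegral_Ioi_deriv_eq_neg (b := 0) (hφ.hasDerivAt_mul_comp_sub h)
      hui.integrableOn (hi.sub hui').integrableOn
    rw [integral_sub hi.integrableOn hui'.integrableOn] at hFTC
    linarith
  have hsum := hasSum_exp_neg_mul hL hfin hR (hφ.hasDerivAt_mul_deriv_comp_sub h) hui'.integrableOn
    (hi'.sub hui'').integrableOn
  simp only [hparts, zero_mul, add_zero] at hsum
  exact hsum.congr_fun fun i => mul_left_comm _ _ _

lemma IsSlowKernel.tsum_mul_exp_neg_mul_deriv_le [Countable ι] (hφ : IsSlowKernel l φ)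
    (hL : ∀ i, 0 ≤ L i) (hfin : ∀ u, {i | L i < u}.Finite) (ha : 0 ≤ a)
    (hR : ∀ u, 0 < u → (1 + u) * |remainder L a u| ≤ C) (h : ℝ) :
    ∑' i, L i * (Real.exp (-L i) * deriv φ (h - L i)) ≤ (a + 2 * l * C) * ∫ v, φ v := by
  have hl := hφ.rate_pos
  have hR' := abs_remainder_le_of_one_add_mul_le hR
  have hC : 0 ≤ C := (abs_nonneg _).trans (hR' 1 one_pos)
  rw [(hφ.hasSum_mul_exp_neg_mul_deriv hL hfin hR' h).tsum_eq]
  have hi := hφ.integrable_comp_sub h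
  have herr : ∫ u in Set.Ioi 0,
      (u * deriv φ (h - u) - (deriv φ (h - u) - u * deriv (deriv φ) (h - u))) * remainder L a u ≤
      2 * l * C * ∫ u in Set.Ioi 0, φ (h - u) := by
    rw [← integral_const_mul]
    refine (Real.le_norm_self _).trans <| norm_integral_le_of_norm_le
      (hi.integrableOn.const_mul _)
      (ae_restrict_of_forall_mem measurableSet_Ioi fun u (hu : 0 < u) => ?_)
    calc _ = |u * deriv φ (h - u) - (deriv φ (h - u) - u * deriv (deriv φ) (h - u))| *
          |remainder L a u| := norm_mul _ _
      _ ≤ 2 * l * ((1 + u) * φ (h - u)) * |remainder L a u| := by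
        gcongr
        exact hφ.abs_mul_deriv_sub_le hu.le (h - u)
      _ = 2 * l * φ (h - u) * ((1 + u) * |remainder L a u|) := by ring
      _ ≤ 2 * l * φ (h - u) * C := by
        have := (hφ.pos (h - u)).le
        gcongr
        exact hR u hu
      _ = 2 * l * C * φ (h - u) := by ring
  have hφle : ∫ u in Set.Ioi 0, φ (h - u) ≤ ∫ v, φ v := by
    rw [← integral_sub_left_eq_self φ volume h]
    exact setIntegral_le_integral hi (.of_forall fun u => (hφ.pos _).le)
  calc _ ≤ a * (∫ u in Set.Ioi 0, φ (h - u)) + 2 * l * C * ∫ u in Set.Ioi 0, φ (h - u) := by gcongr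
    _ = (a + 2 * l * C) * ∫ u in Set.Ioi 0, φ (h - u) := by ring
    _ ≤ (a + 2 * l * C) * ∫ v, φ v := by gcongr

lemma IsSlowKernel.summable_mul_exp_neg_mul [Countable ι] (hφ : IsSlowKernel l φ)
    (hL : ∀ i, 0 ≤ L i) (hfin : ∀ u, {i | L i < u}.Finite)
    (hR : ∀ u, 0 < u → |remainder L a u| ≤ C) (h : ℝ) :
    Summable fun i => L i * (Real.exp (-L i) * φ (h - L i)) := by
  refine (hasSum_exp_neg_mul hL hfin hR (hφ.hasDerivAt_mul_comp_sub h)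
    (hφ.integrable_mul_comp_sub h).integrableOn ((hφ.integrable_comp_sub h).sub
      (hφ.integrable_mul_deriv_comp_sub h)).integrableOn).summable.congr fun i => ?_
  exact mul_left_comm _ _ _

end Smoothing

section PrimePowers

variable {κ : Type*} {ℓ : κ → ℝ}

/-- The logarithm `∑ k, α k * ℓ k` of the generalized integer `∏ k, p k ^ α k`, when
`ℓ k = log (p k)`. -/
noncomputable abbrev logInt (ℓ : κ → ℝ) : (κ →₀ ℕ) →+ ℝ := Finsupp.weight ℓ

/-- The logarithm `(m + 1) * ℓ k` of the prime power `p k ^ (m + 1)`, when `ℓ k = log (p k)`.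
Prime powers are indexed by the pairs `(k, m)`, the exponent being `m + 1`. -/
def primePowerLog (ℓ : κ → ℝ) (j : κ × ℕ) : ℝ :=
  (j.2 + 1) * ℓ j.1

lemma primePowerLog_nonneg (hℓ : ∀ k, 0 ≤ ℓ k) (j : κ × ℕ) : 0 ≤ primePowerLog ℓ j :=
  mul_nonneg (by positivity) (hℓ j.1)

lemma logInt_nonneg (hℓ : ∀ k, 0 ≤ ℓ k) (α : κ →₀ ℕ) : 0 ≤ logInt ℓ α :=
  Finset.sum_nonneg fun k _ => nsmul_nonneg (hℓ k) _

lemma logInt_single_succ_add (ℓ : κ → ℝ) (j : κ × ℕ) (β : κ →₀ ℕ) :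
    logInt ℓ (Finsupp.single j.1 (j.2 + 1) + β) =
      primePowerLog ℓ j + logInt ℓ β := by
  rw [map_add, Finsupp.weight_single, nsmul_eq_mul, Nat.cast_succ, primePowerLog]

lemma nsmul_apply_le_logInt (hℓ : ∀ k, 0 ≤ ℓ k) (α : κ →₀ ℕ) (k : κ) :
    α k • ℓ k ≤ logInt ℓ α := by
  classical
  have hsplit := congrArg (logInt ℓ)
    (tsub_add_cancel_of_le (Finsupp.single_le_iff.2 le_rfl : Finsupp.single k (α k) ≤ α))
  rw [map_add, Finsupp.weight_single] at hsplit
  linarith [logInt_nonneg hℓ (α - Finsupp.single k (α k))]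

lemma finite_setOf_logInt_lt (hℓ : ∀ k, 0 < ℓ k) (hlim : Tendsto ℓ cofinite atTop) (u : ℝ) :
    {α : κ →₀ ℕ | logInt ℓ α < u}.Finite := by
  classical
  have hsmall : {k | ¬u ≤ ℓ k}.Finite := hlim.eventually_ge_atTop u
  refine (Set.finite_Iic (Finsupp.indicator hsmall.toFinset fun k _ => ⌈u / ℓ k⌉₊)).subset ?_
  intro α hα k
  have hlt : α k * ℓ k < u := by
    simpa only [nsmul_eq_mul] using (nsmul_apply_le_logInt (fun k => (hℓ k).le) α k).trans_lt hα
  rw [Finsupp.indicator_apply]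
  split_ifs with hk
  · exact_mod_cast ((lt_div_iff₀ (hℓ k)).2 hlt).le.trans (Nat.le_ceil _)
  · have hle : u ≤ ℓ k := by simpa using hk
    have : (α k : ℝ) < 1 := lt_of_mul_lt_mul_right (by linarith) (hℓ k).le
    exact (Nat.lt_one_iff.1 (by exact_mod_cast this)).le

/-- The identity `log n = ∑ Λ(d)` over the prime powers `d` dividing `n`. -/
lemma hasSum_ite_lt_apply_logInt (ℓ : κ → ℝ) (α : κ →₀ ℕ) :
    HasSum (fun j : κ × ℕ => if j.2 < α j.1 then ℓ j.1 else 0) (logInt ℓ α) := by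
  set n := α.support.sup α
  have hle {k : κ} (hk : k ∈ α.support) : α k ≤ n := Finset.le_sup hk
  have hzero : ∀ j ∉ α.support ×ˢ Finset.range n, (if j.2 < α j.1 then ℓ j.1 else 0) = 0 := by
    intro j hj
    refine if_neg fun hlt => hj ?_
    have hs : j.1 ∈ α.support := Finsupp.mem_support_iff.2 (Nat.ne_zero_of_lt hlt)
    exact Finset.mem_product.2 ⟨hs, Finset.mem_range.2 (hlt.trans_le (hle hs))⟩
  have hsum : ∑ j ∈ α.support ×ˢ Finset.range n, (if j.2 < α j.1 then ℓ j.1 else 0) =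
      logInt ℓ α := by
    rw [Finset.sum_product, Finsupp.weight_apply, Finsupp.sum]
    refine Finset.sum_congr rfl fun k hk => ?_
    have hfilter : (Finset.range n).filter (· < α k) = Finset.range (α k) := by
      ext m
      simp only [Finset.mem_filter, Finset.mem_range]
      exact ⟨And.right, fun hm => ⟨hm.trans_le (hle hk), hm⟩⟩
    simp only [← Finset.sum_filter, hfilter, Finset.sum_const, Finset.card_range]
  exact hsum ▸ hasSum_sum_of_ne_finset_zero hzero

lemma hasSum_ite_lt_apply_mul (hℓ : ∀ k, 0 ≤ ℓ k) {f : (κ →₀ ℕ) → ℝ} {T : ℝ}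
    (hf : HasSum (fun α => logInt ℓ α * f α) T) :
    HasSum (fun x : (κ →₀ ℕ) × (κ × ℕ) => (if x.2.2 < x.1 x.2.1 then ℓ x.2.1 else 0) * f x.1)
      T := by
  have hfiber (α : κ →₀ ℕ) (c : ℝ) := (hasSum_ite_lt_apply_logInt ℓ α).mul_right c
  have hsum : Summable fun x : (κ →₀ ℕ) × (κ × ℕ) =>
      (if x.2.2 < x.1 x.2.1 then ℓ x.2.1 else 0) * f x.1 := by
    have hite (x : (κ →₀ ℕ) × (κ × ℕ)) : 0 ≤ if x.2.2 < x.1 x.2.1 then ℓ x.2.1 else 0 := by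
      split_ifs
      exacts [hℓ _, le_rfl]
    refine Summable.of_norm ?_
    simp only [norm_mul, Real.norm_of_nonneg (hite _)]
    rw [summable_prod_of_nonneg fun x => mul_nonneg (hite x) (norm_nonneg _)]
    refine ⟨fun α => (hfiber α ‖f α‖).summable, hf.summable.norm.congr fun α => ?_⟩
    rw [(hfiber α ‖f α‖).tsum_eq, norm_mul, Real.norm_of_nonneg (logInt_nonneg hℓ α)]
  exact (hsum.hasSum.prod_fiberwise fun α => hfiber α (f α)).unique hf ▸ hsum.hasSum

/-- In `∑ log n * f(n) = ∑ ∑ Λ(d) * f(n)` the pairs `(n, d)` with `d ∣ n` are reindexed as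
`(d, n / d)`. -/
lemma hasSum_mul_comp_primePowerLog_add_logInt (hℓ : ∀ k, 0 ≤ ℓ k) {f : ℝ → ℝ} {T : ℝ}
    (hf : HasSum (fun α => logInt ℓ α * f (logInt ℓ α)) T) :
    HasSum (fun x : (κ × ℕ) × (κ →₀ ℕ) =>
      ℓ x.1.1 * f (primePowerLog ℓ x.1 + logInt ℓ x.2)) T := by
  classical
  set i : (κ × ℕ) × (κ →₀ ℕ) → (κ →₀ ℕ) × (κ × ℕ) :=
    fun x => (Finsupp.single x.1.1 (x.1.2 + 1) + x.2, x.1) with hi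
  have hinj : Function.Injective i := by
    rintro ⟨j, β⟩ ⟨j', β'⟩ h
    obtain ⟨hβ, rfl⟩ := Prod.mk.inj h
    exact congrArg _ (add_left_cancel hβ)
  have hrange : ∀ x ∉ Set.range i,
      (if x.2.2 < x.1 x.2.1 then ℓ x.2.1 else 0) * f (logInt ℓ x.1) = 0 := by
    rintro ⟨α, j⟩ hx
    rw [if_neg, zero_mul]
    exact fun hlt => hx ⟨(j, α - Finsupp.single j.1 (j.2 + 1)),
      Prod.ext (add_tsub_cancel_of_le (Finsupp.single_le_iff.2 hlt)) rfl⟩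
  have hpairs := hasSum_ite_lt_apply_mul hℓ (f := fun α => f (logInt ℓ α)) hf
  refine ((hinj.hasSum_iff hrange).2 hpairs).congr_fun fun x => ?_
  have hlt : x.1.2 < (Finsupp.single x.1.1 (x.1.2 + 1) + x.2) x.1.1 := by
    simp only [Finsupp.add_apply, Finsupp.single_eq_same]
    lia
  simp only [hi, Function.comp_apply, if_pos hlt, logInt_single_succ_add]

end PrimePowers

section SmoothedPsi

variable {κ : Type*} {ℓ : κ → ℝ} {a C l : ℝ} {φ : ℝ → ℝ}

/-- The Chebyshev function on a logarithmic scale, `exp (-h) * ψ(exp h)`, smoothed by `φ`: the sum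
of `Λ(n) / n * φ (h - log n)` over the prime powers `n`. -/
noncomputable def smoothedPsi (ℓ : κ → ℝ) (φ : ℝ → ℝ) (h : ℝ) : ℝ :=
  ∑' j : κ × ℕ, ℓ j.1 * Real.exp (-primePowerLog ℓ j) * φ (h - primePowerLog ℓ j)

lemma mul_exp_neg_primePowerLog_nonneg (hℓ : ∀ k, 0 ≤ ℓ k) (j : κ × ℕ) :
    0 ≤ ℓ j.1 * Real.exp (-primePowerLog ℓ j) :=
  mul_nonneg (hℓ j.1) (Real.exp_pos _).le

lemma IsSlowKernel.smoothedPsi_term_nonneg (hφ : IsSlowKernel l φ) (hℓ : ∀ k, 0 ≤ ℓ k) (h : ℝ)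
    (j : κ × ℕ) :
    0 ≤ ℓ j.1 * Real.exp (-primePowerLog ℓ j) * φ (h - primePowerLog ℓ j) :=
  mul_nonneg (mul_exp_neg_primePowerLog_nonneg hℓ j) (hφ.pos _).le

lemma IsSlowKernel.summable_smoothedPsi [Countable κ] (hφ : IsSlowKernel l φ)
    (hℓ : ∀ k, 0 ≤ ℓ k) (hfin : ∀ u, {α | logInt ℓ α < u}.Finite)
    (hR : ∀ u, 0 < u → |remainder (logInt ℓ) a u| ≤ C) (h : ℝ) :
    Summable fun j : κ × ℕ =>
      ℓ j.1 * Real.exp (-primePowerLog ℓ j) * φ (h - primePowerLog ℓ j) := by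
  have hpairs := (hasSum_mul_comp_primePowerLog_add_logInt hℓ
    (f := fun v => Real.exp (-v) * φ (h - v))
    (hφ.summable_mul_exp_neg_mul (logInt_nonneg hℓ) hfin hR h).hasSum).summable
  refine (hpairs.comp_injective (Prod.mk_left_injective 0)).congr fun j => ?_
  simp only [Function.comp_apply, map_zero, add_zero, mul_assoc]

lemma IsSlowKernel.smoothedPsi_nonneg (hφ : IsSlowKernel l φ) (hℓ : ∀ k, 0 ≤ ℓ k) (h : ℝ) :
    0 ≤ smoothedPsi ℓ φ h :=
  tsum_nonneg (hφ.smoothedPsi_term_nonneg hℓ h)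

lemma IsSlowKernel.smoothedPsi_le_of_le (hφ : IsSlowKernel l φ) (hℓ : ∀ k, 0 ≤ ℓ k)
    (hsum : ∀ h, Summable fun j : κ × ℕ =>
      ℓ j.1 * Real.exp (-primePowerLog ℓ j) * φ (h - primePowerLog ℓ j))
    {h H : ℝ} (hh : h ≤ H) :
    smoothedPsi ℓ φ h ≤ 2 * Real.exp (l * (H + |H|)) * smoothedPsi ℓ φ H := by
  rw [smoothedPsi, smoothedPsi, ← tsum_mul_left]
  refine (hsum h).tsum_le_tsum (fun j => ?_) ((hsum H).mul_left _)
  rw [mul_left_comm]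
  gcongr
  · exact mul_exp_neg_primePowerLog_nonneg hℓ j
  · exact hφ.le_mul_of_le hh (primePowerLog_nonneg hℓ j)

lemma IsSlowKernel.hasSum_primePower_mul_tsum [Countable κ] (hφ : IsSlowKernel l φ)
    (hℓ : ∀ k, 0 ≤ ℓ k) (hfin : ∀ u, {α | logInt ℓ α < u}.Finite)
    (hR : ∀ u, 0 < u → |remainder (logInt ℓ) a u| ≤ C) (h : ℝ) :
    HasSum (fun j : κ × ℕ => ℓ j.1 * Real.exp (-primePowerLog ℓ j) *
        ∑' β, Real.exp (-logInt ℓ β) *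
          deriv φ (h - primePowerLog ℓ j - logInt ℓ β))
      (∑' α, logInt ℓ α *
        (Real.exp (-logInt ℓ α) * deriv φ (h - logInt ℓ α))) := by
  have hw := logInt_nonneg hℓ
  refine (hasSum_mul_comp_primePowerLog_add_logInt hℓ
    (f := fun v => Real.exp (-v) * deriv φ (h - v))
    (hφ.hasSum_mul_exp_neg_mul_deriv hw hfin hR h).summable.hasSum).prod_fiberwise fun j => ?_
  refine ((hφ.hasSum_exp_neg_mul_deriv hw hfin hR (h - primePowerLog ℓ j)).summable.hasSum.mul_left
    (ℓ j.1 * Real.exp (-primePowerLog ℓ j))).congr_fun fun β => ?_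
  rw [neg_add, Real.exp_add, sub_sub]
  ring

lemma IsSlowKernel.sum_primePower_mul_integral_le (hφ : IsSlowKernel l φ) (hℓ : ∀ k, 0 ≤ ℓ k)
    (hsum : ∀ h, Summable fun j : κ × ℕ =>
      ℓ j.1 * Real.exp (-primePowerLog ℓ j) * φ (h - primePowerLog ℓ j))
    {g : ℝ → ℝ} (hg0 : ∀ u, 0 ≤ g u) (hg : IntegrableOn g (Set.Ioi 0))
    (hφg : ∀ y, IntegrableOn (fun u => φ (y - u) * g u) (Set.Ioi 0))
    {h S : ℝ} (hS : ∀ h' ≤ h, smoothedPsi ℓ φ h' ≤ S) (s : Finset (κ × ℕ)) :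
    ∑ j ∈ s, ℓ j.1 * Real.exp (-primePowerLog ℓ j) *
      ∫ u in Set.Ioi 0, φ (h - primePowerLog ℓ j - u) * g u ≤ S * ∫ u in Set.Ioi 0, g u := by
  have hint (j : κ × ℕ) := (hφg (h - primePowerLog ℓ j)).const_mul
    (ℓ j.1 * Real.exp (-primePowerLog ℓ j))
  simp only [← integral_const_mul]
  rw [← integral_finsetSum _ fun j _ => hint j]
  refine setIntegral_mono_on (integrable_finsetSum _ fun j _ => hint j) (hg.const_mul S)
    measurableSet_Ioi fun u (hu : 0 < u) => ?_
  calc ∑ j ∈ s, ℓ j.1 * Real.exp (-primePowerLog ℓ j) * (φ (h - primePowerLog ℓ j - u) * g u)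
      = (∑ j ∈ s, ℓ j.1 * Real.exp (-primePowerLog ℓ j) * φ (h - u - primePowerLog ℓ j)) *
          g u := by
        simp only [Finset.sum_mul, mul_assoc, sub_right_comm]
    _ ≤ S * g u := by
        gcongr
        · exact hg0 u
        · exact ((hsum (h - u)).sum_le_tsum s fun j _ => hφ.smoothedPsi_term_nonneg hℓ _ j).trans
            (hS (h - u) (by linarith))

lemma IsSlowKernel.mul_smoothedPsi_le [Countable κ] (hφ : IsSlowKernel l φ) (hℓ : ∀ k, 0 ≤ ℓ k)
    (hfin : ∀ u, {α | logInt ℓ α < u}.Finite) (ha : 0 ≤ a)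
    (hRi : IntegrableOn (remainder (logInt ℓ) a) (Set.Ioi 0))
    (hR : ∀ u, 0 < u → (1 + u) * |remainder (logInt ℓ) a u| ≤ C) {h S : ℝ}
    (hS : ∀ h' ≤ h, smoothedPsi ℓ φ h' ≤ S) :
    a * smoothedPsi ℓ φ h ≤ (a + 2 * l * C) * (∫ v, φ v) +
      l * (a * smoothedPsi ℓ φ h +
        2 * (S * ∫ u in Set.Ioi 0, |remainder (logInt ℓ) a u|)) := by
  have hl := hφ.rate_pos
  have hw := logInt_nonneg hℓ
  have hR' := abs_remainder_le_of_one_add_mul_le hR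
  have hsum := hφ.summable_smoothedPsi hℓ hfin hR'
  have herr := hφ.sum_primePower_mul_integral_le hℓ hsum (fun u => abs_nonneg _) hRi.abs
    (hφ.integrableOn_mul_abs_remainder hfin hR') hS
  have herr_summable := summable_of_sum_le (fun j => mul_nonneg
    (mul_exp_neg_primePowerLog_nonneg hℓ j)
    (integral_nonneg fun u => mul_nonneg (hφ.pos _).le (abs_nonneg _))) herr
  have hconv := hφ.hasSum_primePower_mul_tsum hℓ hfin hR' h
  have hterms := hasSum_le (fun j => ?_) ((hsum h).hasSum.mul_left a)
    (hconv.add ((((hsum h).hasSum.mul_left a).add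
      (herr_summable.hasSum.mul_left 2)).mul_left l))
  · refine hterms.trans ?_
    gcongr
    · exact hφ.tsum_mul_exp_neg_mul_deriv_le hw hfin ha hR h
    · exact le_rfl
    · exact herr_summable.tsum_le_of_sum_le herr
  · have := mul_le_mul_of_nonneg_left
      (hφ.mul_le_tsum_exp_neg_mul_deriv hw hfin ha hR' (h - primePowerLog ℓ j))
      (mul_exp_neg_primePowerLog_nonneg hℓ j)
    linarith

lemma le_div_of_forall_le_add_mul {P : ℝ → ℝ} {b θ : ℝ} (hθ : θ < 1)
    (hbdd : ∀ H, BddAbove (P '' Set.Iic H))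
    (himp : ∀ h S, (∀ h' ≤ h, P h' ≤ S) → P h ≤ b + θ * S) (H : ℝ) : P H ≤ b / (1 - θ) := by
  set S := sSup (P '' Set.Iic H)
  have hle (h : ℝ) (hh : h ≤ H) : P h ≤ S := le_csSup (hbdd H) ⟨h, hh, rfl⟩
  have hS : S ≤ b + θ * S := by
    refine csSup_le ⟨P H, H, Set.self_mem_Iic, rfl⟩ ?_
    rintro _ ⟨h, hh, rfl⟩
    exact himp h S fun h' hh' => hle h' (hh'.trans hh)
  refine (hle H le_rfl).trans ?_
  rw [le_div_iff₀ (by linarith)]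
  linarith

lemma IsSlowKernel.bddAbove_range_smoothedPsi [Countable κ] (hφ : IsSlowKernel l φ)
    (hℓ : ∀ k, 0 ≤ ℓ k) (hfin : ∀ u, {α | logInt ℓ α < u}.Finite) (ha : 0 < a)
    (hRi : IntegrableOn (remainder (logInt ℓ) a) (Set.Ioi 0))
    (hR : ∀ u, 0 < u → (1 + u) * |remainder (logInt ℓ) a u| ≤ C)
    (hl : l * (a + 2 * ∫ u in Set.Ioi 0, |remainder (logInt ℓ) a u|) ≤ a / 2) :
    BddAbove (Set.range (smoothedPsi ℓ φ)) := by
  have hsum := hφ.summable_smoothedPsi hℓ hfin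
    (abs_remainder_le_of_one_add_mul_le hR)
  refine ⟨(a + 2 * l * C) * (∫ v, φ v) / a / (1 - 1 / 2), Set.forall_mem_range.2 <|
    le_div_of_forall_le_add_mul one_half_lt_one (fun H => ?_) fun h S hS => ?_⟩
  · refine ⟨2 * Real.exp (l * (H + |H|)) * smoothedPsi ℓ φ H, ?_⟩
    rintro _ ⟨h, hh, rfl⟩
    exact hφ.smoothedPsi_le_of_le hℓ hsum hh
  · have hself := hφ.mul_smoothedPsi_le hℓ hfin ha.le hRi hR hS
    have hS0 : 0 ≤ S := (hφ.smoothedPsi_nonneg hℓ h).trans (hS h le_rfl)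
    have hlS := mul_le_mul_of_nonneg_right hl hS0
    have hPS := mul_le_mul_of_nonneg_left (hS h le_rfl) (mul_pos hφ.rate_pos ha).le
    rw [← mul_le_mul_iff_right₀ ha, mul_add, mul_div_cancel₀ _ ha.ne']
    linarith

lemma IsSlowKernel.le_exp_mul_of_primePowerLog_le (hφ : IsSlowKernel l φ) (hl : l ≤ 1)
    (hℓ : ∀ k, 0 ≤ ℓ k) {j : κ × ℕ} {h : ℝ} (hj : primePowerLog ℓ j ≤ h) :
    ℓ j.1 ≤
      Real.exp h * (ℓ j.1 * Real.exp (-primePowerLog ℓ j) * φ (h - primePowerLog ℓ j)) := by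
  have hdist : 0 ≤ h - primePowerLog ℓ j := sub_nonneg.2 hj
  calc ℓ j.1 = Real.exp h * (ℓ j.1 * Real.exp (-primePowerLog ℓ j) *
        Real.exp (-(h - primePowerLog ℓ j))) := by
        rw [mul_assoc, ← Real.exp_add, mul_left_comm, ← Real.exp_add]
        ring_nf
        simp
    _ ≤ _ := by
        gcongr
        · exact mul_exp_neg_primePowerLog_nonneg hℓ j
        · refine le_trans ?_ (hφ.exp_le _)
          rw [abs_of_nonneg hdist]
          gcongr
          exact mul_le_of_le_one_left hdist hl

end SmoothedPsi

section Beurling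

variable {p : ℕ → ℝ} {a C : ℝ}

lemma log_beurlingInt (hp : ∀ k, 0 < p k) (α : ℕ →₀ ℕ) :
    Real.log (beurlingInt p α) = logInt (fun k => Real.log (p k)) α := by
  rw [beurlingInt, Finsupp.prod, Real.log_prod fun k _ => (pow_pos (hp k) _).ne']
  simp only [Real.log_pow, Finsupp.weight_apply, Finsupp.sum, nsmul_eq_mul]

lemma countLT_logInt (hp : ∀ k, 0 < p k) (u : ℝ) :
    countLT (logInt fun k => Real.log (p k)) u = beurlingN p (Real.exp u) := by
  have hpos (α : ℕ →₀ ℕ) : 0 < beurlingInt p α := Finset.prod_pos fun k _ => pow_pos (hp k) _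
  simp only [countLT, beurlingN, ← log_beurlingInt hp, Real.log_lt_iff_lt_exp (hpos _)]

lemma remainder_logInt (hp : ∀ k, 0 < p k) (a u : ℝ) :
    remainder (logInt fun k => Real.log (p k)) a u =
      (beurlingN p (Real.exp u) - a * Real.exp u) / Real.exp u := by
  rw [remainder, countLT_logInt hp, Real.exp_neg]
  field [(Real.exp_pos u).ne']

lemma integrableOn_remainder_logInt (hp : ∀ k, 0 < p k)
    (hL1 : IntegrableOn (fun x : ℝ => ((beurlingN p x : ℝ) - a * x) / x ^ 2) (Set.Ici 1)) :
    IntegrableOn (remainder (logInt fun k => Real.log (p k)) a) (Set.Ioi 0) := by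
  have himage : Real.exp '' Set.Ioi 0 = Set.Ioi 1 := by rw [Real.image_exp_Ioi, Real.exp_zero]
  have h := hL1.mono_set Set.Ioi_subset_Ici_self
  rw [← himage, integrableOn_image_iff_integrableOn_abs_deriv_smul measurableSet_Ioi
    (fun x _ => (Real.hasDerivAt_exp x).hasDerivWithinAt) Real.exp_injective.injOn] at h
  refine h.congr (.of_forall fun u => ?_)
  simp only [remainder_logInt hp, smul_eq_mul, abs_of_pos (Real.exp_pos u)]
  field [(Real.exp_pos u).ne']

lemma one_add_mul_abs_remainder_le {ι : Type*} {L : ι → ℝ} (hfin : ∀ u, {i | L i < u}.Finite)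
    (ha : 0 ≤ a) {b : ℝ} (hb : 0 < b) (hR : ∀ u, b ≤ u → u * |remainder L a u| ≤ C) {u : ℝ}
    (hu : 0 < u) :
    (1 + u) * |remainder L a u| ≤ (1 + b⁻¹) * C + (1 + b) * (countLT L b + a) := by
  have hC : 0 ≤ C := (mul_nonneg hb.le (abs_nonneg _)).trans (hR b le_rfl)
  have hcount := countLT_nonneg L b
  rcases le_total b u with hbu | hub
  · have hscale : 1 + u ≤ (1 + b⁻¹) * u := by
      have : b * b⁻¹ ≤ u * b⁻¹ := by gcongr
      rw [mul_inv_cancel₀ hb.ne'] at this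
      linarith
    calc (1 + u) * |remainder L a u| ≤ (1 + b⁻¹) * u * |remainder L a u| := by gcongr
      _ ≤ (1 + b⁻¹) * C := by
          rw [mul_assoc]
          gcongr
          exact hR u hbu
      _ ≤ _ := le_add_of_nonneg_right (by positivity)
  · have hle : |remainder L a u| ≤ countLT L b + a := by
      have hexp : Real.exp (-u) * countLT L u ≤ 1 * countLT L b :=
        mul_le_mul (Real.exp_le_one_iff.2 (by linarith)) (monotone_countLT hfin hub)
          (countLT_nonneg L u) zero_le_one
      have hnonneg := mul_nonneg (Real.exp_pos (-u)).le (countLT_nonneg L u)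
      rw [remainder, abs_le]
      constructor <;> linarith
    calc (1 + u) * |remainder L a u| ≤ (1 + b) * (countLT L b + a) := by gcongr
      _ ≤ _ := le_add_of_nonneg_left (by positivity)

lemma mul_abs_remainder_logInt_le (hp : ∀ k, 0 < p k)
    (hO : ∀ x : ℝ, 2 ≤ x → |(beurlingN p x : ℝ) - a * x| ≤ C * x / Real.log x) {u : ℝ}
    (hu : Real.log 2 ≤ u) : u * |remainder (logInt fun k => Real.log (p k)) a u| ≤ C := by
  have hu0 : 0 < u := (Real.log_pos one_lt_two).trans_le hu
  have hbound := hO (Real.exp u) ((Real.log_le_iff_le_exp two_pos).1 hu)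
  rw [Real.log_exp, le_div_iff₀ hu0] at hbound
  rw [remainder_logInt hp, abs_div, Real.abs_exp, ← mul_div_assoc,
    div_le_iff₀ (Real.exp_pos u), mul_comm]
  exact hbound

lemma IsSlowKernel.beurlingPsi_le {l : ℝ} {φ : ℝ → ℝ} (hφ : IsSlowKernel l φ) (hl : l ≤ 1)
    (hp : ∀ k, 1 ≤ p k) {x : ℝ} (hx : 0 < x)
    (hsum : Summable fun j : ℕ × ℕ => Real.log (p j.1) *
      Real.exp (-primePowerLog (fun k => Real.log (p k)) j) *
        φ (Real.log x - primePowerLog (fun k => Real.log (p k)) j)) :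
    beurlingPsi p x ≤ x * smoothedPsi (fun k => Real.log (p k)) φ (Real.log x) := by
  have hℓ (k : ℕ) : 0 ≤ Real.log (p k) := Real.log_nonneg (hp k)
  set e : {q : ℕ × ℕ // 1 ≤ q.2 ∧ p q.1 ^ q.2 < x} → ℕ × ℕ := fun q => (q.1.1, q.1.2 - 1) with he
  have hinj : Function.Injective e := by
    rintro ⟨⟨k, m⟩, hm, _⟩ ⟨⟨k', m'⟩, hm', _⟩ h
    simp only [he, Prod.mk.injEq] at h
    simp only [Subtype.mk.injEq, Prod.mk.injEq]
    exact ⟨h.1, by lia⟩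
  have hlog (q) : primePowerLog (fun k => Real.log (p k)) (e q) ≤ Real.log x := by
    obtain ⟨⟨k, m⟩, hm, hlt⟩ := q
    rw [primePowerLog, ← Nat.cast_succ, Nat.succ_eq_add_one, Nat.sub_add_cancel hm, ← Real.log_pow]
    exact Real.log_le_log (pow_pos (zero_lt_one.trans_le (hp k)) m) hlt.le
  have hterm (q) := Real.exp_log hx ▸ hφ.le_exp_mul_of_primePowerLog_le hl hℓ (hlog q)
  rw [smoothedPsi, ← tsum_mul_left]
  exact Summable.tsum_le_tsum_of_inj e hinj
    (fun j _ => mul_nonneg hx.le (hφ.smoothedPsi_term_nonneg hℓ _ j)) hterm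
    (.of_nonneg_of_le (fun q => hℓ _) hterm ((hsum.mul_left x).comp_injective hinj))
    (hsum.mul_left x)

end Beurling

lemma exists_isSlowKernel_mul_le {c ε : ℝ} (hc : 0 < c) (hε : 0 < ε) :
    ∃ l φ, IsSlowKernel l φ ∧ l ≤ 1 ∧ l * c ≤ ε :=
  ⟨min 1 (ε / c), _, isSlowKernel_inv_cosh_mul (lt_min one_pos (div_pos hε hc)) (min_le_left _ _),
    min_le_left _ _, (le_div_iff₀ hc).1 (min_le_right _ _)⟩

theorem chebyshev_upper_estimate_psi_general
    (p : ℕ → ℝ) (hp : ∀ k, 1 < p k) (hptop : Tendsto p atTop atTop)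
    (a : ℝ) (ha : 0 < a)
    (hL1 : IntegrableOn (fun x : ℝ => ((beurlingN p x : ℝ) - a * x) / x ^ 2) (Set.Ici 1))
    (C : ℝ) (hO : ∀ x : ℝ, 2 ≤ x → |(beurlingN p x : ℝ) - a * x| ≤ C * x / Real.log x) :
    ∃ B : ℝ, ∀ x : ℝ, 1 ≤ x → beurlingPsi p x ≤ B * x := by
  set ℓ : ℕ → ℝ := fun k => Real.log (p k)
  have hp0 (k : ℕ) : 0 < p k := one_pos.trans (hp k)
  have hℓ (k : ℕ) : 0 < ℓ k := Real.log_pos (hp k)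
  have hfin (u : ℝ) : {α | logInt ℓ α < u}.Finite := finite_setOf_logInt_lt hℓ
    (Nat.cofinite_eq_atTop ▸ Real.tendsto_log_atTop.comp hptop) u
  have hRi := integrableOn_remainder_logInt hp0 hL1
  have hR (u : ℝ) (hu : 0 < u) := one_add_mul_abs_remainder_le hfin ha.le
    (Real.log_pos one_lt_two) (fun u => mul_abs_remainder_logInt_le hp0 hO) hu
  obtain ⟨l, φ, hφ, hl1, hl⟩ := exists_isSlowKernel_mul_le (ε := a / 2)
    (c := a + 2 * ∫ u in Set.Ioi 0, |remainder (logInt ℓ) a u|)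
    (add_pos_of_pos_of_nonneg ha (mul_nonneg zero_le_two (integral_nonneg fun u => abs_nonneg _)))
    (half_pos ha)
  have hsum := hφ.summable_smoothedPsi (fun k => (hℓ k).le) hfin
    (abs_remainder_le_of_one_add_mul_le hR)
  obtain ⟨B, hB⟩ := hφ.bddAbove_range_smoothedPsi (fun k => (hℓ k).le) hfin ha hRi hR hl
  refine ⟨B, fun x hx => ?_⟩
  have hx0 : 0 < x := one_pos.trans_le hx
  calc beurlingPsi p x ≤ x * smoothedPsi ℓ φ (Real.log x) :=
        hφ.beurlingPsi_le hl1 (fun k => (hp k).le) hx0 (hsum _)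
    _ ≤ x * B := by
        gcongr
        exact hB ⟨_, rfl⟩
    _ = B * x := mul_comm _ _

/-- **Theorem 1, ψ-form (Chebyshev upper estimate for ψ).**
If `N(x) = ax + O(x/log x)` and `∫₁^∞ |N(x) - ax|/x² dx < ∞` for some `a > 0`,
then `ψ(x) ≤ B x`. -/
theorem chebyshev_upper_estimate_psi
    (p : ℕ → ℝ) (hmono : Monotone p) (hp1 : 1 < p 0) (hptop : Tendsto p atTop atTop)
    (a : ℝ) (ha : 0 < a)
    (hL1 : IntegrableOn (fun x : ℝ => ((beurlingN p x : ℝ) - a * x) / x ^ 2) (Set.Ici 1))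
    (C : ℝ) (hO : ∀ x : ℝ, 2 ≤ x → |(beurlingN p x : ℝ) - a * x| ≤ C * x / Real.log x) :
    ∃ B : ℝ, ∀ x : ℝ, 1 ≤ x → beurlingPsi p x ≤ B * x :=
  chebyshev_upper_estimate_psi_general p (fun k => hp1.trans_le (hmono k.zero_le)) hptop a ha hL1 C
    hO
end

section
/- (Lemma 1) Suppose a > 0, ∫₁^∞ |N(x) − a·x| / x² dx < ∞, and there is a constant C with |N(x) − a·x| ≤ C·x / log x for all x ≥ 2. Set T(u) = e^{−u} ψ(e^u). Then there exists c > 0 such that for every smooth compactly supported function φ : ℝ → ℂ with support contained in (−c, c), one has sup_{h ∈ ℝ} |∫_ℝ T(u) φ̂(u − h) du| < ∞, where φ̂(u) = ∫_ℝ φ(t) e^{−iut} dt. -/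
open MeasureTheory Real Filter Complex

/-- The Fourier transform `φ̂(u) = ∫ φ(t) e^{-iut} dt` of a test function. -/
noncomputable def testFT (φ : ℝ → ℂ) (u : ℝ) : ℂ :=
  ∫ t : ℝ, φ t * Complex.exp (-Complex.I * u * t)

/-!
Let `G(u) = e^{-u} N(e^u) - a`, with Laplace transform `Ĝ`. The convolution identity `1 * Λ = log`
for generalized integers gives `ζ · (-ζ'/ζ) = -ζ'`, which in terms of `G` and `T` reads
`(a + s Ĝ(s)) T̂(s) = R(s)` for `Re s > 0`, where `R` is built from transforms of bounded functions:
the hypothesis `|N(x) - a x| ≤ C x / log x` makes `u G(u)` bounded.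

Restrict to `s = σ + it` and multiply by a test function `φ` supported in `(-c, c)`. There `it` may
be replaced by `i` times a Fourier transform `q̂` with `‖q‖₁ ≤ c κ`, so multiplication by `s Ĝ(s)`
increases the supremum of the Fourier transform by a factor of at most `(σ + c κ) ‖G‖₁`. For small
`c` and `σ` this is at most `a / 2`, and the perturbation of `a` is absorbed: the Fourier transform
of `t ↦ φ(t) T̂(σ + it)` is bounded uniformly in `σ`. Letting `σ → 0⁺` gives the convolution
averages of `T`.
-/

section FourierTransform

open scoped FourierTransform

lemma testFT_eq_vectorFourier (φ : ℝ → ℂ) :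
    testFT φ = VectorFourier.fourierIntegral Real.probChar volume (LinearMap.mul ℝ ℝ) φ := by
  ext u
  rw [VectorFourier.fourierIntegral_probChar]
  refine integral_congr_ae (Eventually.of_forall fun t => ?_)
  simp only [LinearMap.mul_apply', smul_eq_mul, mul_comm (φ t)]
  congr 2
  push_cast
  ring

lemma testFT_eq_fourier (φ : ℝ → ℂ) (u : ℝ) : testFT φ u = 𝓕 φ (u / (2 * π)) := by
  rw [Real.fourier_eq']
  refine integral_congr_ae (Eventually.of_forall fun t => ?_)
  simp only [smul_eq_mul, mul_comm (φ t)]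
  congr 2
  simp only [neg_mul, RCLike.inner_apply, ringHom_apply, ofReal_neg, ofReal_mul, ofReal_ofNat,
    ofReal_div, neg_inj]
  field_simp

lemma norm_testFT_le (φ : ℝ → ℂ) (u : ℝ) : ‖testFT φ u‖ ≤ ∫ t, ‖φ t‖ := by
  rw [testFT_eq_vectorFourier]
  exact VectorFourier.norm_fourierIntegral_le_integral_norm _ _ _ _ _

lemma continuous_testFT {φ : ℝ → ℂ} (hφ : Integrable φ) : Continuous (testFT φ) := by
  rw [testFT_eq_vectorFourier]
  exact VectorFourier.fourierIntegral_continuous Real.continuous_probChar continuous_mul hφ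

lemma integrable_mul_cexp {φ : ℝ → ℂ} (hφ : Integrable φ) (u : ℝ) :
    Integrable fun t : ℝ => φ t * cexp (-I * u * t) := by
  refine hφ.mul_bdd (c := 1) (by fun_prop) (Eventually.of_forall fun t => ?_)
  simp [Complex.norm_exp]

lemma testFT_add {φ ψ : ℝ → ℂ} (hφ : Integrable φ) (hψ : Integrable ψ) (u : ℝ) :
    testFT (fun t => φ t + ψ t) u = testFT φ u + testFT ψ u := by
  simp only [testFT, add_mul]
  exact integral_add (integrable_mul_cexp hφ u) (integrable_mul_cexp hψ u)

lemma testFT_const_mul (z : ℂ) (φ : ℝ → ℂ) (u : ℝ) :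
    testFT (fun t => z * φ t) u = z * testFT φ u := by
  simp only [testFT, mul_assoc]
  exact integral_const_mul z _

lemma testFT_mul_cexp (φ : ℝ → ℂ) (h u : ℝ) :
    testFT (fun t => φ t * cexp (-I * h * t)) u = testFT φ (h + u) := by
  refine integral_congr_ae (Eventually.of_forall fun t => ?_)
  simp only [mul_assoc, ← Complex.exp_add]
  congr 2
  push_cast
  ring

lemma integral_testFT_mul {φ g : ℝ → ℂ} (hφ : Integrable φ) (hg : Integrable g) :
    ∫ u, testFT φ u * g u = ∫ t, φ t * testFT g t := by
  have hflip : (LinearMap.mul ℝ ℝ).flip = LinearMap.mul ℝ ℝ :=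
    LinearMap.ext₂ fun x y => mul_comm y x
  rw [testFT_eq_vectorFourier φ, testFT_eq_vectorFourier g]
  nth_rw 2 [← hflip]
  exact VectorFourier.integral_fourierIntegral_smul_eq_flip (L := LinearMap.mul ℝ ℝ)
    Real.continuous_probChar continuous_mul hφ hg

lemma integrable_mul_testFT {Φ g : ℝ → ℂ} (hΦ : Integrable Φ) (hg : Integrable g) :
    Integrable fun t => Φ t * testFT g t :=
  hΦ.mul_bdd (continuous_testFT hg).aestronglyMeasurable
    (Eventually.of_forall (norm_testFT_le g))

lemma testFT_mul_testFT {Φ g : ℝ → ℂ} (hΦ : Integrable Φ) (hg : Integrable g) (h : ℝ) :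
    testFT (fun t => Φ t * testFT g t) h = ∫ v, testFT Φ (h + v) * g v := by
  simp only [← testFT_mul_cexp]
  rw [integral_testFT_mul (integrable_mul_cexp hΦ h) hg]
  exact integral_congr_ae (Eventually.of_forall fun t => mul_right_comm _ _ _)

lemma integrable_pow_mul_testFT {φ : ℝ → ℂ} (hφ : ContDiff ℝ (⊤ : ℕ∞) φ)
    (hs : HasCompactSupport φ) (n : ℕ) : Integrable fun u : ℝ => (u : ℂ) ^ n * testFT φ u := by
  have hdecay := (((𝓕 (hs.toSchwartzMap hφ)).integrable_pow_mul volume n).comp_div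
    (R := 2 * π) (by positivity)).const_mul ((2 * π) ^ n)
  have hcont := continuous_testFT (hφ.continuous.integrable_of_hasCompactSupport hs)
  refine hdecay.mono' (by fun_prop) (Eventually.of_forall fun u => le_of_eq ?_)
  have hpi : |2 * π| = 2 * π := abs_of_pos (by positivity)
  rw [SchwartzMap.fourier_coe, norm_mul, norm_pow, Complex.norm_real, testFT_eq_fourier, norm_div,
    Real.norm_eq_abs (2 * π), hpi, div_pow]
  field_simp
  rfl

lemma testFT_comp_mul_left {c : ℝ} (hc : 0 < c) (q : ℝ → ℂ) (t : ℝ) :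
    testFT (fun v => q (c * v)) t = (c : ℂ)⁻¹ * testFT q (t / c) := by
  have h := Measure.integral_comp_mul_left
    (fun v : ℝ => q v * cexp (-I * (t / c : ℝ) * v)) c
  rw [abs_of_pos (inv_pos.2 hc), Complex.real_smul, Complex.ofReal_inv] at h
  refine Eq.trans (integral_congr_ae (Eventually.of_forall fun v => ?_)) h
  have hc' : (c : ℂ) ≠ 0 := Complex.ofReal_ne_zero.2 hc.ne'
  simp only
  congr 2
  push_cast
  field_simp

lemma exists_testFT_eq_self_near_zero :
    ∃ q : ℝ → ℂ, Integrable q ∧ ∀ t : ℝ, |t| < 1 → testFT q t = t := by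
  let χ : ContDiffBump (0 : ℝ) := ⟨1, 2, one_pos, one_lt_two⟩
  have hs : HasCompactSupport fun x : ℝ => ((2 * π * x * χ x : ℝ) : ℂ) :=
    (χ.hasCompactSupport.mul_left (f := fun x : ℝ => 2 * π * x)).comp_left Complex.ofReal_zero
  have hsmooth : ContDiff ℝ (⊤ : ℕ∞) fun x : ℝ => ((2 * π * x * χ x : ℝ) : ℂ) :=
    Complex.ofRealCLM.contDiff.comp ((contDiff_const.mul contDiff_id).mul χ.contDiff)
  let f : SchwartzMap ℝ ℂ := hs.toSchwartzMap hsmooth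
  refine ⟨(𝓕⁻ f : SchwartzMap ℝ ℂ), SchwartzMap.integrable _, fun t ht => ?_⟩
  have hχ : χ (t / (2 * π)) = 1 := by
    refine χ.one_of_mem_closedBall ?_
    rw [mem_closedBall_zero_iff, Real.norm_eq_abs, abs_div, abs_of_pos (by positivity : 0 < 2 * π)]
    exact div_le_one_of_le₀ (by nlinarith [Real.pi_gt_three]) (by positivity)
  rw [testFT_eq_fourier, ← SchwartzMap.fourier_coe, FourierTransform.fourier_fourierInv_eq]
  simp only [f, HasCompactSupport.toSchwartzMap_toFun, hχ]
  push_cast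
  field_simp

lemma exists_testFT_eq_self :
    ∃ K : ℝ, ∀ c : ℝ, 0 < c → ∃ q : ℝ → ℂ, Integrable q ∧ ∫ v, ‖q v‖ ≤ c * K ∧
      ∀ t : ℝ, |t| < c → testFT q t = t := by
  obtain ⟨q, hq, hqt⟩ := exists_testFT_eq_self_near_zero
  refine ⟨∫ v, ‖q v‖, fun c hc =>
    ⟨fun v => (c : ℂ) ^ 2 * q (c * v), (hq.comp_mul_left' hc.ne').const_mul _, ?_, fun t ht => ?_⟩⟩
  · simp only [norm_mul, norm_pow, Complex.norm_real, Real.norm_eq_abs, abs_of_pos hc]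
    rw [integral_const_mul, Measure.integral_comp_mul_left (fun v => ‖q v‖) c,
      abs_of_pos (inv_pos.2 hc), smul_eq_mul]
    exact le_of_eq (by field_simp)
  · have hlt : |t / c| < 1 := by rwa [abs_div, abs_of_pos hc, div_lt_one hc]
    have hc' : (c : ℂ) ≠ 0 := Complex.ofReal_ne_zero.2 hc.ne'
    rw [testFT_const_mul, testFT_comp_mul_left hc, hqt _ hlt]
    push_cast
    field_simp

end FourierTransform

section FourierBound

/-- `Φ` is integrable with Fourier transform bounded by `M`: the norm of `Φ` in the space of
Fourier transforms of bounded functions is at most `M`. -/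
structure HasFourierBound (Φ : ℝ → ℂ) (M : ℝ) : Prop where
  integrable : Integrable Φ
  norm_le : ∀ ξ, ‖testFT Φ ξ‖ ≤ M

variable {Φ Ψ φ g q : ℝ → ℂ} {M N : ℝ}

namespace HasFourierBound

lemma nonneg (h : HasFourierBound Φ M) : 0 ≤ M :=
  (norm_nonneg _).trans (h.norm_le 0)

lemma mono (h : HasFourierBound Φ M) (hMN : M ≤ N) : HasFourierBound Φ N :=
  ⟨h.integrable, fun ξ => (h.norm_le ξ).trans hMN⟩

lemma add (hΦ : HasFourierBound Φ M) (hΨ : HasFourierBound Ψ N) :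
    HasFourierBound (fun t => Φ t + Ψ t) (M + N) where
  integrable := hΦ.integrable.add hΨ.integrable
  norm_le ξ := by
    rw [testFT_add hΦ.integrable hΨ.integrable]
    exact norm_add_le_of_le (hΦ.norm_le ξ) (hΨ.norm_le ξ)

lemma const_mul (h : HasFourierBound Φ M) (z : ℂ) :
    HasFourierBound (fun t => z * Φ t) (‖z‖ * M) where
  integrable := h.integrable.const_mul z
  norm_le ξ := by
    rw [testFT_const_mul, norm_mul]
    exact mul_le_mul_of_nonneg_left (h.norm_le ξ) (norm_nonneg z)

lemma sub (hΦ : HasFourierBound Φ M) (hΨ : HasFourierBound Ψ N) :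
    HasFourierBound (fun t => Φ t - Ψ t) (M + N) := by
  simpa [sub_eq_add_neg] using hΦ.add (hΨ.const_mul (-1))

lemma mul_testFT (h : HasFourierBound Φ M) (hg : Integrable g) :
    HasFourierBound (fun t => Φ t * testFT g t) (M * ∫ v, ‖g v‖) where
  integrable := integrable_mul_testFT h.integrable hg
  norm_le ξ := by
    rw [testFT_mul_testFT h.integrable hg, ← integral_const_mul]
    refine norm_integral_le_of_norm_le (hg.norm.const_mul M) (Eventually.of_forall fun v => ?_)
    rw [norm_mul]
    exact mul_le_mul_of_nonneg_right (h.norm_le _) (norm_nonneg _)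

end HasFourierBound

lemma hasFourierBound_mul_testFT_of_norm_le (hφ : Integrable φ) (hφ' : Integrable (testFT φ))
    (hg : Integrable g) (hgM : ∀ v, ‖g v‖ ≤ M) :
    HasFourierBound (fun t => φ t * testFT g t) (M * ∫ u, ‖testFT φ u‖) where
  integrable := integrable_mul_testFT hφ hg
  norm_le ξ := by
    rw [testFT_mul_testFT hφ hg, ← integral_add_left_eq_self (fun u => ‖testFT φ u‖) ξ,
      ← integral_const_mul]
    refine norm_integral_le_of_norm_le ((hφ'.comp_add_left ξ).norm.const_mul M)
      (Eventually.of_forall fun v => ?_)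
    rw [norm_mul, mul_comm]
    exact mul_le_mul_of_nonneg_right (hgM v) (norm_nonneg _)

lemma HasFourierBound.of_self_improving (hΨ : Integrable Ψ)
    (himp : ∀ M, HasFourierBound Ψ M → HasFourierBound Ψ (N + M / 2)) :
    HasFourierBound Ψ (2 * N) := by
  have hbdd : BddAbove (Set.range fun ξ => ‖testFT Ψ ξ‖) :=
    ⟨∫ t, ‖Ψ t‖, Set.forall_mem_range.2 (norm_testFT_le Ψ)⟩
  have hsup : HasFourierBound Ψ (⨆ ξ, ‖testFT Ψ ξ‖) := ⟨hΨ, le_ciSup hbdd⟩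
  have hle : ⨆ ξ, ‖testFT Ψ ξ‖ ≤ N + (⨆ ξ, ‖testFT Ψ ξ‖) / 2 :=
    ciSup_le (himp _ hsup).norm_le
  exact hsup.mono (by linarith)

lemma HasFourierBound.of_small_perturbation {a σ : ℝ} (ha : 0 < a) (hσ : 0 ≤ σ)
    (hg : Integrable g) (hq : Integrable q) (hqΨ : ∀ t : ℝ, Ψ t ≠ 0 → testFT q t = t)
    (hsmall : (σ + ∫ v, ‖q v‖) * ∫ v, ‖g v‖ ≤ a / 2) (hΨ : Integrable Ψ)
    (h : HasFourierBound (fun t : ℝ => (a + (σ + I * t) * testFT g t) * Ψ t) M) :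
    HasFourierBound Ψ (2 / a * M) := by
  rw [show 2 / a * M = 2 * (a⁻¹ * M) by ring]
  refine HasFourierBound.of_self_improving hΨ fun S hS => ?_
  have hpert := ((hS.const_mul σ).add ((hS.mul_testFT hq).const_mul I)).mul_testFT hg
  convert ((h.sub hpert).const_mul (a⁻¹ : ℝ)).mono ?_ using 1
  · ext t
    have ha' : (a : ℂ) ≠ 0 := Complex.ofReal_ne_zero.2 ha.ne'
    have hqt : Ψ t * testFT q t = Ψ t * t := by
      rcases eq_or_ne (Ψ t) 0 with h0 | h0
      · simp [h0]
      · rw [hqΨ t h0]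
    rw [hqt]
    push_cast
    field_simp
    ring
  · have hbound : a⁻¹ * ((σ + ∫ v, ‖q v‖) * ∫ v, ‖g v‖) * S ≤ 1 / 2 * S := by
      refine mul_le_mul_of_nonneg_right ?_ hS.nonneg
      rw [inv_mul_le_iff₀ ha]
      linarith
    simp only [Complex.norm_real, Real.norm_eq_abs, abs_of_pos (inv_pos.2 ha), abs_of_nonneg hσ,
      Complex.norm_I, one_mul]
    linarith

end FourierBound

section LaplaceTransform

/-- The Laplace transform `∫₀^∞ W(u) e^{-su} du`, with the junk value `0` where the integral does
not converge absolutely. -/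
noncomputable def laplaceTransform (W : ℝ → ℂ) (s : ℂ) : ℂ :=
  ∫ u in Set.Ioi (0 : ℝ), W u * cexp (-(s * u))

/-- Absolute convergence of the integral defining the Laplace transform of `W` at `s`. -/
def LaplaceConvergent (W : ℝ → ℂ) (s : ℂ) : Prop :=
  IntegrableOn (fun u : ℝ => W u * cexp (-(s * u))) (Set.Ioi 0)

/-- `W(u) e^{-σu}` on the half-line `u > 0`, extended by `0`: the function whose Fourier transform
is the Laplace transform of `W` along the vertical line `Re s = σ`. -/
noncomputable def damped (W : ℝ → ℂ) (σ : ℝ) : ℝ → ℂ :=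
  (Set.Ioi 0).indicator fun u => W u * cexp (-(σ * u))

variable {W V Φ φ : ℝ → ℂ} {s z : ℂ} {σ K M h : ℝ}

lemma laplaceTransform_eq_testFT_damped (W : ℝ → ℂ) (σ t : ℝ) :
    laplaceTransform W (σ + I * t) = testFT (damped W σ) t := by
  rw [laplaceTransform, ← integral_indicator measurableSet_Ioi]
  refine integral_congr_ae (Eventually.of_forall fun u => ?_)
  by_cases hu : u ∈ Set.Ioi (0 : ℝ)
  · simp only [damped, Set.indicator_of_mem hu, mul_assoc, ← Complex.exp_add]
    ring_nf
  · simp only [damped, Set.indicator_of_notMem hu, zero_mul]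

lemma integrable_damped_iff : Integrable (damped W σ) ↔ LaplaceConvergent W σ :=
  integrable_indicator_iff measurableSet_Ioi

lemma norm_damped (W : ℝ → ℂ) (σ u : ℝ) :
    ‖damped W σ u‖ = (Set.Ioi 0).indicator (fun u => ‖W u‖ * Real.exp (-(σ * u))) u := by
  simp [damped, norm_indicator_eq_indicator_norm, Complex.norm_exp]

lemma norm_damped_le_indicator (W : ℝ → ℂ) (hσ : 0 ≤ σ) (u : ℝ) :
    ‖damped W σ u‖ ≤ (Set.Ioi 0).indicator (fun u => ‖W u‖) u := by
  rw [norm_damped]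
  refine Set.indicator_le_indicator' fun hu => mul_le_of_le_one_right (norm_nonneg _) ?_
  exact Real.exp_le_one_iff.2 (neg_nonpos.2 (mul_nonneg hσ (le_of_lt hu)))

lemma norm_damped_le (hσ : 0 ≤ σ) (hW : ∀ u > 0, ‖W u‖ ≤ K) (u : ℝ) :
    ‖damped W σ u‖ ≤ K := by
  have hK : 0 ≤ K := (norm_nonneg _).trans (hW 1 one_pos)
  exact (norm_damped_le_indicator W hσ u).trans (Set.indicator_le' hW (fun _ _ => hK) u)

lemma integral_norm_damped_le (hσ : 0 ≤ σ) (hW : IntegrableOn W (Set.Ioi 0)) :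
    ∫ u, ‖damped W σ u‖ ≤ ∫ u in Set.Ioi (0 : ℝ), ‖W u‖ := by
  rw [← integral_indicator measurableSet_Ioi]
  exact integral_mono_of_nonneg (Eventually.of_forall fun u => norm_nonneg _)
    ((integrable_indicator_iff measurableSet_Ioi).2 hW.norm)
    (Eventually.of_forall (norm_damped_le_indicator W hσ))

lemma LaplaceConvergent.add (hW : LaplaceConvergent W s) (hV : LaplaceConvergent V s) :
    LaplaceConvergent (fun u => W u + V u) s :=
  (Integrable.add hW hV).congr (Eventually.of_forall fun _ => (add_mul _ _ _).symm)

lemma laplaceTransform_add (hW : LaplaceConvergent W s) (hV : LaplaceConvergent V s) :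
    laplaceTransform (fun u => W u + V u) s = laplaceTransform W s + laplaceTransform V s := by
  simp only [laplaceTransform, add_mul]
  exact integral_add hW hV

lemma LaplaceConvergent.const_mul (hW : LaplaceConvergent W s) (z : ℂ) :
    LaplaceConvergent (fun u => z * W u) s :=
  (Integrable.const_mul hW z).congr (Eventually.of_forall fun _ => (mul_assoc _ _ _).symm)

lemma laplaceTransform_const_mul (z : ℂ) (W : ℝ → ℂ) (s : ℂ) :
    laplaceTransform (fun u => z * W u) s = z * laplaceTransform W s := by
  simp only [laplaceTransform, mul_assoc]
  exact integral_const_mul z _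

lemma laplace_integrand_shift (W : ℝ → ℂ) (s z : ℂ) (u : ℝ) :
    cexp (-(z * u)) * W u * cexp (-(s * u)) = W u * cexp (-((s + z) * u)) := by
  rw [mul_comm (cexp _), mul_assoc, ← Complex.exp_add]
  ring_nf

lemma laplaceConvergent_cexp_mul_iff :
    LaplaceConvergent (fun u => cexp (-(z * u)) * W u) s ↔ LaplaceConvergent W (s + z) := by
  simp only [LaplaceConvergent, laplace_integrand_shift]

lemma laplaceTransform_cexp_mul (W : ℝ → ℂ) (s z : ℂ) :
    laplaceTransform (fun u => cexp (-(z * u)) * W u) s = laplaceTransform W (s + z) := by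
  simp only [laplaceTransform, laplace_integrand_shift]

lemma laplaceConvergent_of_norm_le_linear
    (hWm : AEStronglyMeasurable W (volume.restrict (Set.Ioi 0))) (hs : 0 < s.re)
    (hW : ∀ u > 0, ‖W u‖ ≤ K * (1 + u)) : LaplaceConvergent W s := by
  have hlin : IntegrableOn (fun u : ℝ => u ^ (1 : ℝ) * Real.exp (-s.re * u ^ (1 : ℝ)))
      (Set.Ioi 0) :=
    integrableOn_rpow_mul_exp_neg_mul_rpow (by norm_num) one_pos hs
  have hdom : IntegrableOn (fun u : ℝ => K * (Real.exp (-s.re * u) + u * Real.exp (-s.re * u)))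
      (Set.Ioi 0) := by
    simp only [Real.rpow_one] at hlin
    exact ((exp_neg_integrableOn_Ioi 0 hs).add hlin).const_mul K
  refine hdom.mono' (hWm.mul (by fun_prop)) ?_
  filter_upwards [ae_restrict_mem measurableSet_Ioi] with u hu
  have hexp : ‖cexp (-(s * u))‖ = Real.exp (-s.re * u) := by simp [Complex.norm_exp]
  calc ‖W u * cexp (-(s * u))‖ = ‖W u‖ * Real.exp (-s.re * u) := by rw [norm_mul, hexp]
    _ ≤ K * (1 + u) * Real.exp (-s.re * u) := by gcongr; exact hW u hu
    _ = K * (Real.exp (-s.re * u) + u * Real.exp (-s.re * u)) := by ring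

lemma laplaceConvergent_one (hs : 0 < s.re) : LaplaceConvergent 1 s :=
  laplaceConvergent_of_norm_le_linear (K := 1) aestronglyMeasurable_const hs
    fun u hu => by simpa using le_of_lt hu

lemma laplaceTransform_one (hs : 0 < s.re) : laplaceTransform 1 s = 1 / s := by
  have h := integral_exp_mul_complex_Ioi (a := -s) (by simpa using hs) 0
  simpa [laplaceTransform, neg_div_neg_eq] using h

lemma integrable_damped (hσ : 0 ≤ σ) (hW : IntegrableOn W (Set.Ioi 0)) :
    Integrable (damped W σ) :=
  ((integrable_indicator_iff measurableSet_Ioi).2 hW.norm).mono'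
    ((aestronglyMeasurable_indicator_iff measurableSet_Ioi).2
      (hW.aestronglyMeasurable.mul (Continuous.aestronglyMeasurable (by fun_prop))))
    (Eventually.of_forall (norm_damped_le_indicator W hσ))

lemma HasFourierBound.mul_laplaceTransform (hΦ : HasFourierBound Φ M) (hσ : 0 ≤ σ)
    (hW : IntegrableOn W (Set.Ioi 0)) :
    HasFourierBound (fun t => Φ t * laplaceTransform W (σ + I * t))
      (M * ∫ u in Set.Ioi 0, ‖W u‖) := by
  simp only [laplaceTransform_eq_testFT_damped]
  exact (hΦ.mul_testFT (integrable_damped hσ hW)).mono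
    (mul_le_mul_of_nonneg_left (integral_norm_damped_le hσ hW) hΦ.nonneg)

lemma hasFourierBound_mul_laplaceTransform_of_norm_le (hφ : Integrable φ)
    (hφ' : Integrable (testFT φ)) (hσ : 0 ≤ σ) (hW : LaplaceConvergent W σ)
    (hWM : ∀ u > 0, ‖W u‖ ≤ M) :
    HasFourierBound (fun t => φ t * laplaceTransform W (σ + I * t))
      (M * ∫ u, ‖testFT φ u‖) := by
  simp only [laplaceTransform_eq_testFT_damped]
  exact hasFourierBound_mul_testFT_of_norm_le hφ hφ' (integrable_damped_iff.2 hW)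
    (norm_damped_le hσ hWM)

-- `1 / (s + 1)` is the Laplace transform of `e^{-u}`, which has total mass one.
lemma HasFourierBound.mul_inv_add_one (hΦ : HasFourierBound Φ M) (hσ : 0 ≤ σ) :
    HasFourierBound (fun t => Φ t * (σ + I * t + 1)⁻¹) M := by
  have hint : IntegrableOn (fun u : ℝ => cexp (-(1 * u)) * 1) (Set.Ioi 0) := by
    simpa [LaplaceConvergent, mul_comm] using laplaceConvergent_one (s := 1) (by simp)
  have hmass : ∫ u : ℝ in Set.Ioi 0, ‖cexp (-(1 * u)) * 1‖ = 1 := by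
    simpa [Complex.norm_exp] using integral_exp_neg_Ioi_zero
  have hL (t : ℝ) : laplaceTransform (fun u => cexp (-(1 * u)) * 1) (σ + I * t) =
      (σ + I * t + 1)⁻¹ := by
    rw [← one_div]
    refine (laplaceTransform_cexp_mul 1 _ _).trans (laplaceTransform_one ?_)
    simpa using by positivity
  have h := hΦ.mul_laplaceTransform hσ hint
  rw [hmass, mul_one] at h
  simpa only [hL] using h

lemma tendsto_integral_damped (hW : IntegrableOn W (Set.Ioi 0)) :
    Tendsto (fun σ => ∫ u, damped W σ u) (nhdsWithin 0 (Set.Ioi 0))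
      (nhds (∫ u in Set.Ioi (0 : ℝ), W u)) := by
  rw [← integral_indicator measurableSet_Ioi]
  refine tendsto_integral_filter_of_dominated_convergence ((Set.Ioi 0).indicator fun u => ‖W u‖)
    ?_ ?_ ((integrable_indicator_iff measurableSet_Ioi).2 hW.norm)
    (Eventually.of_forall fun u => tendsto_nhdsWithin_of_tendsto_nhds ?_)
  · filter_upwards [self_mem_nhdsWithin] with σ hσ
    exact (integrable_damped (le_of_lt hσ) hW).aestronglyMeasurable
  · filter_upwards [self_mem_nhdsWithin] with σ hσ
    exact Eventually.of_forall (norm_damped_le_indicator W (le_of_lt hσ))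
  · by_cases hu : u ∈ Set.Ioi (0 : ℝ)
    · simp only [damped, Set.indicator_of_mem hu]
      exact Continuous.tendsto' (by fun_prop) _ _ (by simp)
    · simp only [damped, Set.indicator_of_notMem hu, tendsto_const_nhds]

lemma norm_setIntegral_mul_testFT_le (hφ : Integrable φ)
    (hW : ∀ σ : ℝ, 0 < σ → LaplaceConvergent W σ)
    (hWφ : IntegrableOn (fun u => W u * testFT φ (u - h)) (Set.Ioi 0))
    (hbound : ∀ᶠ σ : ℝ in nhdsWithin 0 (Set.Ioi 0),
      HasFourierBound (fun t => φ t * laplaceTransform W (σ + I * t)) M) :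
    ‖∫ u in Set.Ioi 0, W u * testFT φ (u - h)‖ ≤ M := by
  refine le_of_tendsto (tendsto_integral_damped hWφ).norm ?_
  filter_upwards [hbound, self_mem_nhdsWithin] with σ hσM hσ
  have hFT : ∫ u, damped (fun u => W u * testFT φ (u - h)) σ u =
      testFT (fun t => φ t * laplaceTransform W (σ + I * t)) (-h) := by
    simp only [laplaceTransform_eq_testFT_damped]
    rw [testFT_mul_testFT hφ (integrable_damped_iff.2 (hW σ hσ))]
    refine integral_congr_ae (Eventually.of_forall fun u => ?_)
    by_cases hu : u ∈ Set.Ioi (0 : ℝ)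
    · simp only [damped, Set.indicator_of_mem hu]
      ring_nf
    · simp only [damped, Set.indicator_of_notMem hu, mul_zero]
  exact hFT ▸ hσM.norm_le (-h)

end LaplaceTransform

section Summatory

/-- The summatory function `u ↦ ∑_{l i < u} w i` of the weights `w` at the frequencies `l`. -/
noncomputable def summatory {ι : Type*} (l w : ι → ℝ) (u : ℝ) : ℝ :=
  ∑' i, {i | l i < u}.indicator w i

variable {ι : Type*} {l w : ι → ℝ} {z : ℂ}

lemma hasSum_summatory (w : ι → ℝ) (hfin : ∀ u, {i | l i < u}.Finite) (u : ℝ) :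
    HasSum ({i | l i < u}.indicator w) (summatory l w u) :=
  (summable_of_hasFiniteSupport ((hfin u).subset Set.support_indicator_subset)).hasSum

lemma summatory_mono (hw : ∀ i, 0 ≤ w i) (hfin : ∀ u, {i | l i < u}.Finite) :
    Monotone (summatory l w) := fun u v huv =>
  hasSum_le (Set.indicator_le_indicator_of_subset (fun _ hi => lt_of_lt_of_le hi huv) hw)
    (hasSum_summatory w hfin u) (hasSum_summatory w hfin v)

lemma summatory_nonneg (hw : ∀ i, 0 ≤ w i) (u : ℝ) : 0 ≤ summatory l w u :=
  tsum_nonneg (Set.indicator_nonneg fun i _ => hw i)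

lemma summatory_of_nonpos (hl : ∀ i, 0 ≤ l i) (w : ι → ℝ) {u : ℝ} (hu : u ≤ 0) :
    summatory l w u = 0 := by
  have hempty : {i | l i < u} = ∅ := Set.eq_empty_of_forall_notMem fun i hi =>
    (hu.trans (hl i)).not_gt hi
  simp [summatory, hempty]

lemma summatory_le_mul_summatory_one (hwl : ∀ i, w i ≤ l i) (hfin : ∀ u, {i | l i < u}.Finite)
    (u : ℝ) : summatory l w u ≤ u * summatory l 1 u := by
  refine hasSum_le (fun i => ?_) (hasSum_summatory w hfin u)
    ((hasSum_summatory 1 hfin u).mul_left u)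
  by_cases hi : l i < u
  · simpa [hi] using (hwl i).trans hi.le
  · simp [hi]

lemma hasSum_integral_mul_summatory [Countable ι] (hl : ∀ i, 0 ≤ l i) (hw : ∀ i, 0 ≤ w i)
    (hfin : ∀ u, {i | l i < u}.Finite) {k : ℝ → ℂ} (hk : Continuous k)
    (hkF : IntegrableOn (fun u => k u * summatory l w u) (Set.Ioi 0)) :
    HasSum (fun i => w i * ∫ u in Set.Ioi (l i), k u)
      (∫ u in Set.Ioi 0, k u * summatory l w u) := by
  let term (i : ι) (u : ℝ) : ℂ := (Set.Ioi (l i)).indicator (fun u => w i * k u) u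
  have hterm (i : ι) (u : ℝ) : term i u = k u * ({i | l i < u}.indicator w i : ℝ) := by
    by_cases hi : l i < u <;> simp [term, hi, mul_comm]
  have hnorm (u : ℝ) : HasSum (fun i => ‖term i u‖) ‖k u * summatory l w u‖ := by
    simp only [hterm, norm_mul, Complex.norm_real, Real.norm_eq_abs,
      abs_of_nonneg (summatory_nonneg hw u),
      abs_of_nonneg (Set.indicator_nonneg (fun i _ => hw i) _)]
    exact (hasSum_summatory w hfin u).mul_left _
  have hmeas (i : ι) : AEStronglyMeasurable (term i) (volume.restrict (Set.Ioi 0)) :=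
    (hk.const_mul _).aestronglyMeasurable.indicator measurableSet_Ioi
  have hintegral (i : ι) :
      ∫ u in Set.Ioi 0, term i u = w i * ∫ u in Set.Ioi (l i), k u := by
    rw [setIntegral_indicator measurableSet_Ioi,
      Set.inter_eq_right.2 (Set.Ioi_subset_Ioi (hl i)), integral_const_mul]
  simp only [← hintegral]
  refine hasSum_integral_of_dominated_convergence (fun i u => ‖term i u‖) hmeas
    (fun i => Eventually.of_forall fun u => le_rfl)
    (Eventually.of_forall fun u => (hnorm u).summable) ?_ (Eventually.of_forall fun u => ?_)
  · simpa only [(hnorm _).tsum_eq] using hkF.norm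
  · simp only [hterm]
    exact (Complex.hasSum_ofReal.2 (hasSum_summatory w hfin u)).mul_left (k u)

lemma integral_Ioi_cexp_neg (hz : 0 < z.re) (x : ℝ) :
    ∫ u : ℝ in Set.Ioi x, cexp (-(z * u)) = cexp (-(z * x)) / z := by
  simpa [neg_div_neg_eq] using integral_exp_mul_complex_Ioi (a := -z) (by simpa using hz) x

lemma laplaceConvergent_mul_sub_one (hz : 0 < z.re) :
    LaplaceConvergent (fun u : ℝ => z * u - 1) z := by
  refine laplaceConvergent_of_norm_le_linear (K := ‖z‖ + 1) (by fun_prop) hz fun u hu => ?_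
  calc ‖z * u - 1‖ ≤ ‖z‖ * u + 1 := by
        simpa [abs_of_pos hu] using norm_sub_le (z * u) 1
    _ ≤ (‖z‖ + 1) * (1 + u) := by nlinarith [norm_nonneg z, hu.lt]

lemma integral_Ioi_mul_sub_one_mul_cexp_neg (hz : 0 < z.re) {x : ℝ} (hx : 0 ≤ x) :
    ∫ u : ℝ in Set.Ioi x, (z * u - 1) * cexp (-(z * u)) = x * cexp (-(z * x)) := by
  have hderiv (y : ℝ) : HasDerivAt (fun u : ℝ => -((u : ℂ) * cexp (-(z * u))))
      ((z * y - 1) * cexp (-(z * y))) y := by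
    have hexp : HasDerivAt (fun u : ℂ => cexp (-(z * u))) (cexp (-(z * y)) * -(z * 1)) (y : ℂ) :=
      ((hasDerivAt_id (y : ℂ)).const_mul z).neg.cexp
    refine (((hasDerivAt_id (y : ℂ)).mul hexp).neg.congr_deriv ?_).comp_ofReal
    simp only [id]
    ring
  have hlim : Tendsto (fun u : ℝ => -((u : ℂ) * cexp (-(z * u)))) atTop (nhds 0) := by
    rw [tendsto_zero_iff_norm_tendsto_zero]
    refine (tendsto_rpow_mul_exp_neg_mul_atTop_nhds_zero 1 z.re hz).congr' ?_
    filter_upwards [eventually_ge_atTop 0] with u hu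
    simp [Complex.norm_exp, abs_of_nonneg hu]
  rw [integral_Ioi_of_hasDerivAt_of_tendsto' (fun y _ => hderiv y)
    ((laplaceConvergent_mul_sub_one hz).mono_set (Set.Ioi_subset_Ioi hx)) hlim]
  ring

lemma laplaceConvergent_id (hz : 0 < z.re) : LaplaceConvergent (fun u => u) z :=
  laplaceConvergent_of_norm_le_linear (K := 1) (by fun_prop) hz fun u hu => by
    simp [abs_of_pos hu]

lemma laplaceTransform_id (hz : 0 < z.re) : laplaceTransform (fun u => u) z = 1 / z ^ 2 := by
  have hz0 : z ≠ 0 := by rintro rfl; simp at hz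
  have hzero : laplaceTransform (fun u => z * u - 1) z = 0 := by
    simpa [laplaceTransform] using integral_Ioi_mul_sub_one_mul_cexp_neg hz le_rfl
  have h := laplaceTransform_add (laplaceConvergent_mul_sub_one hz) (laplaceConvergent_one hz)
  simp only [Pi.one_apply, sub_add_cancel, laplaceTransform_const_mul z, hzero,
    laplaceTransform_one hz] at h
  field_simp at h ⊢
  linear_combination h

lemma hasSum_mul_cexp_neg [Countable ι] (hl : ∀ i, 0 ≤ l i) (hw : ∀ i, 0 ≤ w i)
    (hfin : ∀ u, {i | l i < u}.Finite) (hz : 0 < z.re)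
    (hF : LaplaceConvergent (fun u => summatory l w u) z) :
    HasSum (fun i => w i * cexp (-(z * l i)))
      (z * laplaceTransform (fun u => summatory l w u) z) := by
  have hz0 : z ≠ 0 := by rintro rfl; simp at hz
  have h := hasSum_integral_mul_summatory hl hw hfin (k := fun u => cexp (-(z * u)))
    (by fun_prop) (by simpa only [LaplaceConvergent, mul_comm] using hF)
  simp only [integral_Ioi_cexp_neg hz, mul_comm (cexp _) (ofReal _)] at h
  have hterm (i : ι) : (w i : ℂ) * cexp (-(z * l i)) = z * (w i * (cexp (-(z * l i)) / z)) := by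
    field_simp
  simpa only [hterm, laplaceTransform] using h.mul_left z

lemma hasSum_mul_freq_mul_cexp_neg [Countable ι] (hl : ∀ i, 0 ≤ l i) (hw : ∀ i, 0 ≤ w i)
    (hfin : ∀ u, {i | l i < u}.Finite) (hz : 0 < z.re)
    (hF : LaplaceConvergent (fun u => (z * u - 1) * summatory l w u) z) :
    HasSum (fun i => w i * (l i * cexp (-(z * l i))))
      (laplaceTransform (fun u => (z * u - 1) * summatory l w u) z) := by
  have h := hasSum_integral_mul_summatory hl hw hfin
    (k := fun u => (z * u - 1) * cexp (-(z * u))) (by fun_prop)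
    (by simpa only [LaplaceConvergent, mul_right_comm] using hF)
  simp only [integral_Ioi_mul_sub_one_mul_cexp_neg hz (hl _)] at h
  simpa only [laplaceTransform, mul_right_comm] using h

end Summatory

section GeneralizedIntegers

variable {p : ℕ → ℝ} {s z : ℂ}

lemma beurlingInt_add (p : ℕ → ℝ) (α β : ℕ →₀ ℕ) :
    beurlingInt p (α + β) = beurlingInt p α * beurlingInt p β :=
  Finsupp.prod_add_index' (fun _ => pow_zero _) fun _ _ _ => pow_add _ _ _

lemma beurlingInt_single (p : ℕ → ℝ) (k m : ℕ) :
    beurlingInt p (Finsupp.single k m) = p k ^ m :=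
  Finsupp.prod_single_index (pow_zero _)

lemma one_le_beurlingInt (hp : ∀ k, 1 < p k) (α : ℕ →₀ ℕ) : 1 ≤ beurlingInt p α :=
  Finset.prod_induction _ (1 ≤ ·) (fun _ _ => one_le_mul_of_one_le_of_one_le) le_rfl
    fun k _ => one_le_pow₀ (hp k).le

lemma beurlingInt_pos (hp : ∀ k, 1 < p k) (α : ℕ →₀ ℕ) : 0 < beurlingInt p α :=
  one_pos.trans_le (one_le_beurlingInt hp α)

lemma beurlingInt_mono (hp : ∀ k, 1 < p k) : Monotone (beurlingInt p) := fun α β hαβ => by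
  rw [← tsub_add_cancel_of_le hαβ, beurlingInt_add]
  exact le_mul_of_one_le_left (beurlingInt_pos hp α).le (one_le_beurlingInt hp _)

lemma pow_le_beurlingInt (hp : ∀ k, 1 < p k) (α : ℕ →₀ ℕ) (k : ℕ) :
    p k ^ α k ≤ beurlingInt p α := by
  rw [← beurlingInt_single]
  exact beurlingInt_mono hp (Finsupp.single_le_iff.2 le_rfl)

lemma finite_setOf_beurlingInt_lt (hp : ∀ k, 1 < p k) (hptop : Tendsto p atTop atTop) (x : ℝ) :
    {α : ℕ →₀ ℕ | beurlingInt p α < x}.Finite := by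
  obtain ⟨K, hK⟩ := eventually_atTop.1 (hptop.eventually_ge_atTop x)
  choose m hm using fun k => pow_unbounded_of_one_lt x (hp k)
  let bound : ℕ →₀ ℕ := Finsupp.onFinset (Finset.range K) (fun k => if k < K then m k else 0)
    fun k hk => by simpa using (ite_ne_right_iff.1 hk).1
  refine (Set.finite_Iic bound).subset fun α hα k => ?_
  have hlt : p k ^ α k < x := (pow_le_beurlingInt hp α k).trans_lt hα
  change α k ≤ if k < K then m k else 0
  split_ifs with hk
  · exact ((pow_lt_pow_iff_right₀ (hp k)).1 (hlt.trans (hm k))).le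
  · by_contra! hαk
    exact (hK k (not_lt.1 hk)).not_gt ((le_self_pow₀ (hp k).le hαk.ne').trans_lt hlt)

/-- The logarithm of the generalized integer attached to an exponent vector. -/
noncomputable def beurlingLog (p : ℕ → ℝ) (α : ℕ →₀ ℕ) : ℝ :=
  Real.log (beurlingInt p α)

/-- The von Mangoldt function of the generalized primes: `log (p k)` at the prime power with
exponent vector `m` at `k`, `m ≥ 1`, and `0` elsewhere. Prime powers are recognized as the exponent
vectors with a one-point support. -/
noncomputable def beurlingVonMangoldt (p : ℕ → ℝ) (α : ℕ →₀ ℕ) : ℝ :=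
  if α.support.card = 1 then ∑ k ∈ α.support, Real.log (p k) else 0

lemma beurlingLog_nonneg (hp : ∀ k, 1 < p k) (α : ℕ →₀ ℕ) : 0 ≤ beurlingLog p α :=
  Real.log_nonneg (one_le_beurlingInt hp α)

lemma beurlingLog_add (hp : ∀ k, 1 < p k) (α β : ℕ →₀ ℕ) :
    beurlingLog p (α + β) = beurlingLog p α + beurlingLog p β := by
  rw [beurlingLog, beurlingInt_add,
    Real.log_mul (beurlingInt_pos hp α).ne' (beurlingInt_pos hp β).ne']
  rfl

lemma beurlingLog_single (p : ℕ → ℝ) (k m : ℕ) :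
    beurlingLog p (Finsupp.single k m) = m * Real.log (p k) := by
  rw [beurlingLog, beurlingInt_single, Real.log_pow]

lemma beurlingLog_eq_sum (hp : ∀ k, 1 < p k) (α : ℕ →₀ ℕ) :
    beurlingLog p α = ∑ k ∈ α.support, α k * Real.log (p k) := by
  rw [beurlingLog, beurlingInt, Finsupp.prod,
    Real.log_prod fun k _ => (pow_pos (one_pos.trans (hp k)) _).ne']
  simp only [Real.log_pow]

lemma beurlingLog_lt_iff (hp : ∀ k, 1 < p k) (α : ℕ →₀ ℕ) (u : ℝ) :
    beurlingLog p α < u ↔ beurlingInt p α < Real.exp u :=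
  Real.log_lt_iff_lt_exp (beurlingInt_pos hp α)

lemma finite_setOf_beurlingLog_lt (hp : ∀ k, 1 < p k) (hptop : Tendsto p atTop atTop) (u : ℝ) :
    {α | beurlingLog p α < u}.Finite := by
  simpa only [beurlingLog_lt_iff hp] using finite_setOf_beurlingInt_lt hp hptop (Real.exp u)

lemma beurlingVonMangoldt_single (p : ℕ → ℝ) (k : ℕ) {m : ℕ} (hm : m ≠ 0) :
    beurlingVonMangoldt p (Finsupp.single k m) = Real.log (p k) := by
  simp [beurlingVonMangoldt, Finsupp.support_single, hm]

lemma exists_eq_single_of_beurlingVonMangoldt_ne_zero {α : ℕ →₀ ℕ}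
    (hα : beurlingVonMangoldt p α ≠ 0) : ∃ k m, m ≠ 0 ∧ α = Finsupp.single k m := by
  obtain ⟨k, hk, h⟩ := Finsupp.card_support_eq_one.1 (ite_ne_right_iff.1 hα).1
  exact ⟨k, α k, hk, h⟩

lemma beurlingVonMangoldt_nonneg (hp : ∀ k, 1 < p k) (α : ℕ →₀ ℕ) :
    0 ≤ beurlingVonMangoldt p α := by
  rw [beurlingVonMangoldt]
  split_ifs
  exacts [Finset.sum_nonneg fun k _ => Real.log_nonneg (hp k).le, le_rfl]

lemma beurlingVonMangoldt_le_beurlingLog (hp : ∀ k, 1 < p k) (α : ℕ →₀ ℕ) :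
    beurlingVonMangoldt p α ≤ beurlingLog p α := by
  by_cases hα : beurlingVonMangoldt p α = 0
  · exact hα.trans_le (beurlingLog_nonneg hp α)
  · obtain ⟨k, m, hm, rfl⟩ := exists_eq_single_of_beurlingVonMangoldt_ne_zero hα
    rw [beurlingVonMangoldt_single p k hm, beurlingLog_single]
    exact le_mul_of_one_le_left (Real.log_nonneg (hp k).le)
      (Nat.one_le_cast.2 (Nat.one_le_iff_ne_zero.2 hm))

lemma sum_antidiagonal_beurlingVonMangoldt (hp : ∀ k, 1 < p k) (γ : ℕ →₀ ℕ) :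
    ∑ x ∈ Finset.HasAntidiagonal.antidiagonal γ, beurlingVonMangoldt p x.2 = beurlingLog p γ := by
  have hlog : beurlingLog p γ =
      ∑ x ∈ γ.support.sigma fun k => Finset.Icc 1 (γ k), Real.log (p x.1) := by
    simp [beurlingLog_eq_sum hp, Finset.sum_sigma]
  rw [hlog]
  symm
  have hle {x : Σ _ : ℕ, ℕ} (hx : x ∈ γ.support.sigma fun k => Finset.Icc 1 (γ k)) :
      Finsupp.single x.1 x.2 ≤ γ ∧ x.2 ≠ 0 := by
    simp only [Finset.mem_sigma, Finset.mem_Icc] at hx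
    exact ⟨Finsupp.single_le_iff.2 hx.2.2, by omega⟩
  refine Finset.sum_of_injOn
    (fun x => (γ - Finsupp.single x.1 x.2, Finsupp.single x.1 x.2)) ?_ ?_ ?_ ?_
  · rintro ⟨k, m⟩ hx ⟨k', m'⟩ - h
    have hne := (hle hx).2
    have h2 := (Finsupp.single_eq_single_iff _ _ _ _).1 (Prod.ext_iff.1 h).2
    grind
  · exact fun x hx => Finset.HasAntidiagonal.mem_antidiagonal.2 (tsub_add_cancel_of_le (hle hx).1)
  · rintro ⟨α, β⟩ hαβ hnot
    by_contra hβ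
    obtain ⟨k, m, hm, rfl⟩ := exists_eq_single_of_beurlingVonMangoldt_ne_zero hβ
    obtain rfl := Finset.HasAntidiagonal.mem_antidiagonal.1 hαβ
    refine hnot ⟨⟨k, m⟩, ?_, by simp⟩
    simp only [Finset.mem_coe, Finset.mem_sigma, Finset.mem_Icc, Finsupp.mem_support_iff,
      Finsupp.add_apply, Finsupp.single_eq_same]
    omega
  · exact fun x hx => (beurlingVonMangoldt_single p _ (hle hx).2).symm

lemma beurlingN_exp (hp : ∀ k, 1 < p k) (hptop : Tendsto p atTop atTop) (u : ℝ) :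
    (beurlingN p (Real.exp u) : ℝ) = summatory (beurlingLog p) 1 u := by
  have hfin := finite_setOf_beurlingLog_lt hp hptop u
  have hset : {α | beurlingInt p α < Real.exp u} = {α | beurlingLog p α < u} := by
    simp only [beurlingLog_lt_iff hp]
  rw [beurlingN, hset, Set.ncard_eq_toFinset_card _ hfin, summatory,
    tsum_eq_sum (s := hfin.toFinset) fun α hα => Set.indicator_of_notMem (by simpa using hα) _,
    Finset.sum_congr rfl fun α hα => Set.indicator_of_mem (by simpa using hα) _]
  simp

lemma beurlingPsi_exp (hp : ∀ k, 1 < p k) (u : ℝ) :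
    beurlingPsi p (Real.exp u) = summatory (beurlingLog p) (beurlingVonMangoldt p) u := by
  let e (q : {q : ℕ × ℕ // 1 ≤ q.2 ∧ p q.1 ^ q.2 < Real.exp u}) : ℕ →₀ ℕ :=
    Finsupp.single q.1.1 q.1.2
  have he : Function.Injective e := by
    rintro ⟨⟨k, m⟩, hm, _⟩ ⟨⟨k', m'⟩, _⟩ h
    have := (Finsupp.single_eq_single_iff _ _ _ _).1 h
    grind
  have hrange : Function.support ({α | beurlingLog p α < u}.indicator (beurlingVonMangoldt p)) ⊆
      Set.range e := by
    intro α hα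
    rw [Function.mem_support, Set.indicator_apply_ne_zero] at hα
    obtain ⟨k, m, hm, rfl⟩ := exists_eq_single_of_beurlingVonMangoldt_ne_zero hα.2
    have hlt := (beurlingLog_lt_iff hp _ u).1 hα.1
    rw [beurlingInt_single] at hlt
    exact ⟨⟨(k, m), Nat.one_le_iff_ne_zero.2 hm, hlt⟩, rfl⟩
  rw [summatory, ← he.tsum_eq hrange]
  refine tsum_congr fun q => ?_
  have hq : e q ∈ {α | beurlingLog p α < u} := by
    change beurlingLog p (e q) < u
    rw [beurlingLog_lt_iff hp, beurlingInt_single]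
    exact q.2.2
  rw [Set.indicator_of_mem hq, beurlingVonMangoldt_single p _ (Nat.one_le_iff_ne_zero.1 q.2.1)]

lemma beurlingPsi_exp_le (hp : ∀ k, 1 < p k) (hptop : Tendsto p atTop atTop) (u : ℝ) :
    beurlingPsi p (Real.exp u) ≤ u * beurlingN p (Real.exp u) := by
  rw [beurlingPsi_exp hp, beurlingN_exp hp hptop]
  exact summatory_le_mul_summatory_one (beurlingVonMangoldt_le_beurlingLog hp)
    (finite_setOf_beurlingLog_lt hp hptop) u

lemma beurlingPsi_exp_nonneg (hp : ∀ k, 1 < p k) (u : ℝ) : 0 ≤ beurlingPsi p (Real.exp u) := by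
  rw [beurlingPsi_exp hp]
  exact summatory_nonneg (beurlingVonMangoldt_nonneg hp) u

lemma beurlingPsi_exp_of_nonpos (hp : ∀ k, 1 < p k) {u : ℝ} (hu : u ≤ 0) :
    beurlingPsi p (Real.exp u) = 0 := by
  rw [beurlingPsi_exp hp]
  exact summatory_of_nonpos (beurlingLog_nonneg hp) _ hu

lemma measurable_beurlingN_exp (hp : ∀ k, 1 < p k) (hptop : Tendsto p atTop atTop) :
    Measurable fun u => (beurlingN p (Real.exp u) : ℝ) := by
  simp only [beurlingN_exp hp hptop]
  exact (summatory_mono (fun _ => zero_le_one) (finite_setOf_beurlingLog_lt hp hptop)).measurable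

lemma measurable_beurlingPsi_exp (hp : ∀ k, 1 < p k) (hptop : Tendsto p atTop atTop) :
    Measurable fun u => beurlingPsi p (Real.exp u) := by
  simp only [beurlingPsi_exp hp]
  exact (summatory_mono (beurlingVonMangoldt_nonneg hp)
    (finite_setOf_beurlingLog_lt hp hptop)).measurable

lemma tsum_mul_tsum_beurlingVonMangoldt (hp : ∀ k, 1 < p k)
    (hone : Summable fun α => cexp (-(z * beurlingLog p α)))
    (hΛ : Summable fun α => beurlingVonMangoldt p α * cexp (-(z * beurlingLog p α))) :
    (∑' α, cexp (-(z * beurlingLog p α))) *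
        ∑' α, beurlingVonMangoldt p α * cexp (-(z * beurlingLog p α)) =
      ∑' α, beurlingLog p α * cexp (-(z * beurlingLog p α)) := by
  have hprod := summable_mul_of_summable_norm hone.norm hΛ.norm
  rw [hone.tsum_mul_tsum_eq_tsum_sum_antidiagonal hΛ hprod]
  refine tsum_congr fun γ => ?_
  have hterm : ∀ x ∈ Finset.HasAntidiagonal.antidiagonal γ,
      cexp (-(z * beurlingLog p x.1)) *
          (beurlingVonMangoldt p x.2 * cexp (-(z * beurlingLog p x.2))) =
        beurlingVonMangoldt p x.2 * cexp (-(z * beurlingLog p γ)) := fun x hx => by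
    rw [← Finset.HasAntidiagonal.mem_antidiagonal.1 hx, beurlingLog_add hp, mul_left_comm,
      ← Complex.exp_add, Complex.ofReal_add, mul_add, neg_add]
  rw [Finset.sum_congr rfl hterm, ← Finset.sum_mul, ← Complex.ofReal_sum,
    sum_antidiagonal_beurlingVonMangoldt hp]

/-- `e^{-u} N(e^u)`, the counting function in logarithmic scale relative to its expected size. -/
noncomputable def normalizedN (p : ℕ → ℝ) (u : ℝ) : ℝ :=
  Real.exp (-u) * beurlingN p (Real.exp u)

/-- `T(u) = e^{-u} ψ(e^u)`, the Chebyshev function in logarithmic scale relative to its expected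
size. -/
noncomputable def normalizedPsi (p : ℕ → ℝ) (u : ℝ) : ℝ :=
  Real.exp (-u) * beurlingPsi p (Real.exp u)

lemma ofReal_normalizedN (hp : ∀ k, 1 < p k) (hptop : Tendsto p atTop atTop) (u : ℝ) :
    (normalizedN p u : ℂ) = cexp (-(1 * u)) * summatory (beurlingLog p) 1 u := by
  rw [normalizedN, beurlingN_exp hp hptop]
  push_cast
  rw [one_mul]

lemma ofReal_normalizedPsi (hp : ∀ k, 1 < p k) (u : ℝ) :
    (normalizedPsi p u : ℂ) =
      cexp (-(1 * u)) * summatory (beurlingLog p) (beurlingVonMangoldt p) u := by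
  rw [normalizedPsi, beurlingPsi_exp hp]
  push_cast
  rw [one_mul]

lemma hasSum_cexp_neg_beurlingLog (hp : ∀ k, 1 < p k) (hptop : Tendsto p atTop atTop)
    (hs : 0 < s.re) (hN : LaplaceConvergent (fun u => normalizedN p u) s) :
    HasSum (fun α => cexp (-((s + 1) * beurlingLog p α)))
      ((s + 1) * laplaceTransform (fun u => normalizedN p u) s) := by
  simp only [ofReal_normalizedN hp hptop, laplaceConvergent_cexp_mul_iff,
    laplaceTransform_cexp_mul] at hN ⊢
  simpa using hasSum_mul_cexp_neg (w := 1) (beurlingLog_nonneg hp) (fun _ => zero_le_one)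
    (finite_setOf_beurlingLog_lt hp hptop) (by simpa using hs.trans (lt_add_one _)) hN

lemma hasSum_beurlingVonMangoldt_mul_cexp_neg (hp : ∀ k, 1 < p k) (hptop : Tendsto p atTop atTop)
    (hs : 0 < s.re) (hT : LaplaceConvergent (fun u => normalizedPsi p u) s) :
    HasSum (fun α => beurlingVonMangoldt p α * cexp (-((s + 1) * beurlingLog p α)))
      ((s + 1) * laplaceTransform (fun u => normalizedPsi p u) s) := by
  simp only [ofReal_normalizedPsi hp, laplaceConvergent_cexp_mul_iff,
    laplaceTransform_cexp_mul] at hT ⊢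
  exact hasSum_mul_cexp_neg (beurlingLog_nonneg hp) (beurlingVonMangoldt_nonneg hp)
    (finite_setOf_beurlingLog_lt hp hptop) (by simpa using hs.trans (lt_add_one _)) hT

lemma hasSum_beurlingLog_mul_cexp_neg (hp : ∀ k, 1 < p k) (hptop : Tendsto p atTop atTop)
    (hs : 0 < s.re) (hN : LaplaceConvergent (fun u => normalizedN p u) s)
    (huN : LaplaceConvergent (fun u => u * normalizedN p u) s) :
    HasSum (fun α => beurlingLog p α * cexp (-((s + 1) * beurlingLog p α)))
      ((s + 1) * laplaceTransform (fun u => u * normalizedN p u) s -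
        laplaceTransform (fun u => normalizedN p u) s) := by
  have hsplit : (fun u : ℝ => (s + 1) * (u * normalizedN p u : ℂ) + -1 * normalizedN p u) =
      fun u : ℝ => cexp (-(1 * u)) * (((s + 1) * u - 1) * summatory (beurlingLog p) 1 u) := by
    ext u
    rw [ofReal_normalizedN hp hptop]
    ring
  have hconv := (huN.const_mul (s + 1)).add (hN.const_mul (-1))
  have heq := laplaceTransform_add (huN.const_mul (s + 1)) (hN.const_mul (-1))
  simp only [hsplit, laplaceConvergent_cexp_mul_iff, laplaceTransform_cexp_mul,
    laplaceTransform_const_mul] at hconv heq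
  rw [sub_eq_add_neg, ← neg_one_mul (laplaceTransform _ s), ← heq]
  simpa using hasSum_mul_freq_mul_cexp_neg (w := 1) (beurlingLog_nonneg hp)
    (fun _ => zero_le_one)
    (finite_setOf_beurlingLog_lt hp hptop) (by simpa using hs.trans (lt_add_one _)) hconv

-- With `ζ` the zeta function of the generalized integers, this is `ζ · (-ζ'/ζ) = -ζ'` at `s + 1`.
theorem mul_laplaceTransform_normalizedPsi (hp : ∀ k, 1 < p k) (hptop : Tendsto p atTop atTop)
    (hs : 0 < s.re) (hN : LaplaceConvergent (fun u => normalizedN p u) s)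
    (huN : LaplaceConvergent (fun u => u * normalizedN p u) s)
    (hT : LaplaceConvergent (fun u => normalizedPsi p u) s) :
    (s + 1) ^ 2 * laplaceTransform (fun u => normalizedN p u) s *
        laplaceTransform (fun u => normalizedPsi p u) s =
      (s + 1) * laplaceTransform (fun u => u * normalizedN p u) s -
        laplaceTransform (fun u => normalizedN p u) s := by
  have hone := hasSum_cexp_neg_beurlingLog hp hptop hs hN
  have hΛ := hasSum_beurlingVonMangoldt_mul_cexp_neg hp hptop hs hT
  have hlog := hasSum_beurlingLog_mul_cexp_neg hp hptop hs hN huN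
  rw [← hlog.tsum_eq, ← tsum_mul_tsum_beurlingVonMangoldt hp hone.summable hΛ.summable,
    hone.tsum_eq, hΛ.tsum_eq]
  ring

end GeneralizedIntegers

section DensityError

/-- The relative error `e^{-u} N(e^u) - a` of the counting function against the density `a`. -/
noncomputable def densityError (p : ℕ → ℝ) (a u : ℝ) : ℝ :=
  normalizedN p u - a

variable {p : ℕ → ℝ} {a B : ℝ} {s : ℂ}

lemma densityError_eq (p : ℕ → ℝ) (a u : ℝ) : densityError p a u =
    Real.exp (-u) * ((beurlingN p (Real.exp u) : ℝ) - a * Real.exp u) := by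
  rw [densityError, normalizedN, Real.exp_neg]
  field_simp

lemma integrableOn_densityError_iff (p : ℕ → ℝ) (a : ℝ) :
    IntegrableOn (densityError p a) (Set.Ioi 0) ↔
      IntegrableOn (fun x : ℝ => ((beurlingN p x : ℝ) - a * x) / x ^ 2) (Set.Ici 1) := by
  have hsub (u : ℝ) : densityError p a u = Real.exp u •
      (((beurlingN p (Real.exp u) : ℝ) - a * Real.exp u) / Real.exp u ^ 2) := by
    rw [densityError_eq, Real.exp_neg, smul_eq_mul]
    field_simp
  rw [integrableOn_Ici_iff_integrableOn_Ioi, ← Real.exp_zero,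
    ← integrableOn_comp_exp_Ioi (fun x : ℝ => ((beurlingN p x : ℝ) - a * x) / x ^ 2)]
  simp only [← hsub]

lemma abs_densityError_le_of_exp_le (hp : ∀ k, 1 < p k) (hptop : Tendsto p atTop atTop) (a : ℝ)
    {u x : ℝ} (hu : 0 ≤ u) (hux : Real.exp u ≤ x) :
    |densityError p a u| ≤ beurlingN p x + |a| := by
  have hmono : (beurlingN p (Real.exp u) : ℝ) ≤ beurlingN p x :=
    Nat.cast_le.2 (Set.ncard_le_ncard (fun α hα => lt_of_lt_of_le hα hux)
      (finite_setOf_beurlingInt_lt hp hptop x))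
  have hexp : Real.exp (-u) ≤ 1 := Real.exp_le_one_iff.2 (neg_nonpos.2 hu)
  calc |densityError p a u| ≤ |normalizedN p u| + |a| := abs_sub _ _
    _ = Real.exp (-u) * beurlingN p (Real.exp u) + |a| := by
      rw [normalizedN, abs_of_nonneg (by positivity)]
    _ ≤ 1 * beurlingN p x + |a| := by gcongr
    _ = beurlingN p x + |a| := by rw [one_mul]

lemma mul_abs_densityError_le_of_log_two_le {C : ℝ}
    (hO : ∀ x : ℝ, 2 ≤ x → |(beurlingN p x : ℝ) - a * x| ≤ C * x / Real.log x) {u : ℝ}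
    (hu : Real.log 2 ≤ u) : u * |densityError p a u| ≤ C := by
  have hx := hO (Real.exp u) ((Real.log_le_iff_le_exp two_pos).1 hu)
  have hu0 : 0 < u := (Real.log_pos one_lt_two).trans_le hu
  rw [densityError_eq, abs_mul, Real.abs_exp]
  calc u * (Real.exp (-u) * |(beurlingN p (Real.exp u) : ℝ) - a * Real.exp u|)
      ≤ u * (Real.exp (-u) * (C * Real.exp u / Real.log (Real.exp u))) := by gcongr
    _ = C := by
      rw [Real.log_exp, Real.exp_neg]
      field_simp

lemma exists_one_add_mul_abs_densityError_le (hp : ∀ k, 1 < p k) (hptop : Tendsto p atTop atTop)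
    {C : ℝ} (hO : ∀ x : ℝ, 2 ≤ x → |(beurlingN p x : ℝ) - a * x| ≤ C * x / Real.log x) :
    ∃ B, ∀ u > 0, (1 + u) * |densityError p a u| ≤ B := by
  have hlog2 : 1 / 2 < Real.log 2 := by linarith [Real.log_two_gt_d9]
  refine ⟨max (2 * (beurlingN p 2 + |a|)) (3 * C), fun u hu => ?_⟩
  rcases lt_or_ge u (Real.log 2) with hlt | hge
  · have hexp := ((Real.lt_log_iff_exp_lt two_pos).1 hlt).le
    refine le_max_of_le_left (mul_le_mul ?_ (abs_densityError_le_of_exp_le hp hptop a hu.le hexp)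
      (abs_nonneg _) zero_le_two)
    linarith [Real.log_two_lt_d9]
  · have hG := mul_abs_densityError_le_of_log_two_le hO hge
    exact le_max_of_le_right (by nlinarith [abs_nonneg (densityError p a u)])

lemma abs_densityError_le (hB : ∀ u > 0, (1 + u) * |densityError p a u| ≤ B) {u : ℝ} (hu : 0 < u) :
    |densityError p a u| ≤ B :=
  (le_mul_of_one_le_left (abs_nonneg _) (by linarith)).trans (hB u hu)

lemma mul_abs_densityError_le (hB : ∀ u > 0, (1 + u) * |densityError p a u| ≤ B) {u : ℝ}
    (hu : 0 < u) : u * |densityError p a u| ≤ B :=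
  (mul_le_mul_of_nonneg_right (by linarith) (abs_nonneg _)).trans (hB u hu)

lemma abs_normalizedPsi_le (hp : ∀ k, 1 < p k) (hptop : Tendsto p atTop atTop)
    (hB : ∀ u > 0, (1 + u) * |densityError p a u| ≤ B) (u : ℝ) :
    |normalizedPsi p u| ≤ (a + B) * |u| := by
  rw [normalizedPsi, abs_of_nonneg (mul_nonneg (Real.exp_nonneg _) (beurlingPsi_exp_nonneg hp u))]
  rcases le_or_gt u 0 with hu | hu
  · have haB : 0 ≤ a + B := by
      have hone : 0 ≤ a + densityError p a 1 := by
        rw [densityError, normalizedN, add_sub_cancel]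
        positivity
      linarith [le_abs_self (densityError p a 1), abs_densityError_le hB one_pos]
    rw [beurlingPsi_exp_of_nonpos hp hu, mul_zero]
    positivity
  · calc Real.exp (-u) * beurlingPsi p (Real.exp u)
        ≤ Real.exp (-u) * (u * beurlingN p (Real.exp u)) := by
          gcongr
          exact beurlingPsi_exp_le hp hptop u
      _ = (a + densityError p a u) * u := by
          rw [densityError, normalizedN]
          ring
      _ ≤ (a + B) * |u| := by
          rw [abs_of_pos hu]
          gcongr
          exact (le_abs_self _).trans (abs_densityError_le hB hu)

lemma measurable_normalizedN (hp : ∀ k, 1 < p k) (hptop : Tendsto p atTop atTop) :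
    Measurable (normalizedN p) :=
  (by fun_prop : Measurable fun u : ℝ => Real.exp (-u)).mul (measurable_beurlingN_exp hp hptop)

lemma measurable_densityError (hp : ∀ k, 1 < p k) (hptop : Tendsto p atTop atTop) (a : ℝ) :
    Measurable (densityError p a) :=
  (measurable_normalizedN hp hptop).sub_const a

lemma measurable_normalizedPsi (hp : ∀ k, 1 < p k) (hptop : Tendsto p atTop atTop) :
    Measurable (normalizedPsi p) :=
  (by fun_prop : Measurable fun u : ℝ => Real.exp (-u)).mul (measurable_beurlingPsi_exp hp hptop)

lemma laplaceConvergent_densityError (hp : ∀ k, 1 < p k) (hptop : Tendsto p atTop atTop)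
    (hB : ∀ u > 0, (1 + u) * |densityError p a u| ≤ B) (hs : 0 < s.re) :
    LaplaceConvergent (fun u => densityError p a u) s := by
  have hm := measurable_densityError hp hptop a
  refine laplaceConvergent_of_norm_le_linear (K := B) (by fun_prop) hs fun u hu => ?_
  have hB0 : 0 ≤ B := (abs_nonneg _).trans (abs_densityError_le hB hu)
  rw [Complex.norm_real, Real.norm_eq_abs]
  exact (abs_densityError_le hB hu).trans (le_mul_of_one_le_right hB0 (by linarith))

lemma laplaceConvergent_mul_densityError (hp : ∀ k, 1 < p k) (hptop : Tendsto p atTop atTop)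
    (hB : ∀ u > 0, (1 + u) * |densityError p a u| ≤ B) (hs : 0 < s.re) :
    LaplaceConvergent (fun u => u * densityError p a u) s := by
  have hm := measurable_densityError hp hptop a
  refine laplaceConvergent_of_norm_le_linear (K := B) (by fun_prop) hs fun u hu => ?_
  have hB0 : 0 ≤ B := (abs_nonneg _).trans (abs_densityError_le hB hu)
  rw [norm_mul, Complex.norm_real, Complex.norm_real, Real.norm_of_nonneg hu.le, Real.norm_eq_abs]
  exact (mul_abs_densityError_le hB hu).trans (le_mul_of_one_le_right hB0 (by linarith))

lemma laplaceConvergent_normalizedPsi (hp : ∀ k, 1 < p k) (hptop : Tendsto p atTop atTop)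
    (hB : ∀ u > 0, (1 + u) * |densityError p a u| ≤ B) (hs : 0 < s.re) :
    LaplaceConvergent (fun u => normalizedPsi p u) s := by
  have hm := measurable_normalizedPsi hp hptop
  refine laplaceConvergent_of_norm_le_linear (K := a + B) (by fun_prop) hs fun u hu => ?_
  have h := abs_normalizedPsi_le hp hptop hB 1
  have hT := abs_normalizedPsi_le hp hptop hB u
  rw [abs_one, mul_one] at h
  rw [abs_of_pos hu] at hT
  rw [Complex.norm_real, Real.norm_eq_abs]
  linarith [abs_nonneg (normalizedPsi p 1)]

-- The zeta identity times `s / (s + 1) ^ 2`, chosen to clear the pole at `s = 0` and to leave only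
-- Laplace transforms of bounded functions on the right.
theorem add_mul_laplaceTransform_densityError_mul (hp : ∀ k, 1 < p k)
    (hptop : Tendsto p atTop atTop) (hB : ∀ u > 0, (1 + u) * |densityError p a u| ≤ B)
    (hs : 0 < s.re) :
    (a + s * laplaceTransform (fun u => densityError p a u) s) *
        laplaceTransform (fun u => normalizedPsi p u) s =
      a * (s⁻¹ * (s + 1)⁻¹ * (s + 1)⁻¹) +
        (laplaceTransform (fun u => u * densityError p a u) s -
          laplaceTransform (fun u => u * densityError p a u) s * (s + 1)⁻¹) -
        (laplaceTransform (fun u => densityError p a u) s * (s + 1)⁻¹ -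
          laplaceTransform (fun u => densityError p a u) s * (s + 1)⁻¹ * (s + 1)⁻¹) := by
  have hs0 : s ≠ 0 := by rintro rfl; simp at hs
  have hs1 : s + 1 ≠ 0 := fun h => by
    have : s.re + 1 = 0 := by simpa using congrArg Complex.re h
    linarith
  have hG := laplaceConvergent_densityError hp hptop hB hs
  have huG := laplaceConvergent_mul_densityError hp hptop hB hs
  have hone := (laplaceConvergent_one hs).const_mul a
  have hid := (laplaceConvergent_id hs).const_mul a
  have hsplit : (fun u : ℝ => (normalizedN p u : ℂ)) =
      fun u => a * (1 : ℝ → ℂ) u + densityError p a u := by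
    ext u
    simp [densityError]
  have husplit : (fun u : ℝ => (u * normalizedN p u : ℂ)) =
      fun u : ℝ => a * (u : ℂ) + u * densityError p a u := by
    ext u
    simp only [densityError]
    push_cast
    ring
  have hzeta := mul_laplaceTransform_normalizedPsi hp hptop hs (hsplit ▸ hone.add hG)
    (husplit ▸ hid.add huG) (laplaceConvergent_normalizedPsi hp hptop hB hs)
  rw [hsplit, husplit, laplaceTransform_add hone hG, laplaceTransform_add hid huG,
    laplaceTransform_const_mul, laplaceTransform_const_mul, laplaceTransform_one hs,
    laplaceTransform_id hs] at hzeta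
  generalize laplaceTransform (fun u => densityError p a u) s = X at *
  generalize laplaceTransform (fun u => u * densityError p a u) s = Y at *
  generalize laplaceTransform (fun u => normalizedPsi p u) s = Z at *
  field_simp at hzeta ⊢
  linear_combination hzeta

lemma hasFourierBound_perturbed_laplaceTransform_normalizedPsi (hp : ∀ k, 1 < p k)
    (hptop : Tendsto p atTop atTop) (hB : ∀ u > 0, (1 + u) * |densityError p a u| ≤ B)
    {φ : ℝ → ℂ} (hφ : Integrable φ) (hφ' : Integrable (testFT φ)) {σ : ℝ} (hσ : 0 < σ) :
    HasFourierBound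
      (fun t => (a + (σ + I * t) * laplaceTransform (fun u => densityError p a u) (σ + I * t)) *
        (φ t * laplaceTransform (fun u => normalizedPsi p u) (σ + I * t)))
      ((|a| + 4 * B) * ∫ u, ‖testFT φ u‖) := by
  have hre : 0 < (σ : ℂ).re := hσ
  have hbound {W : ℝ → ℂ} {M : ℝ} (hW : LaplaceConvergent W σ) (hM : ∀ u > 0, ‖W u‖ ≤ M) :=
    hasFourierBound_mul_laplaceTransform_of_norm_le hφ hφ' hσ.le hW hM
  have hpole := (hbound (laplaceConvergent_one hre) (M := 1) (by simp)).mul_inv_add_one hσ.le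
    |>.mul_inv_add_one hσ.le |>.const_mul a
  have hX := (hbound (laplaceConvergent_densityError hp hptop hB hre) (M := B) fun u hu => by
    simpa using abs_densityError_le hB hu).mul_inv_add_one hσ.le
  have hY := hbound (laplaceConvergent_mul_densityError hp hptop hB hre) (M := B) fun u hu => by
    simpa [abs_of_pos hu] using mul_abs_densityError_le hB hu
  convert ((hpole.add (hY.sub (hY.mul_inv_add_one hσ.le))).sub
    (hX.sub (hX.mul_inv_add_one hσ.le))) using 1
  · ext t
    have hre' : 0 < (σ + I * t : ℂ).re := by simpa using hσ
    rw [mul_left_comm, add_mul_laplaceTransform_densityError_mul hp hptop hB hre',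
      laplaceTransform_one hre']
    ring
  · simp only [Complex.norm_real, Real.norm_eq_abs]
    ring

lemma hasFourierBound_mul_laplaceTransform_normalizedPsi (hp : ∀ k, 1 < p k)
    (hptop : Tendsto p atTop atTop) (hB : ∀ u > 0, (1 + u) * |densityError p a u| ≤ B)
    (ha : 0 < a) (hG : IntegrableOn (densityError p a) (Set.Ioi 0))
    {φ q : ℝ → ℂ} (hφ : Integrable φ) (hφ' : Integrable (testFT φ))
    (hq : Integrable q) (hqφ : ∀ t : ℝ, φ t ≠ 0 → testFT q t = t) {σ : ℝ} (hσ : 0 < σ)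
    (hsmall : (σ + ∫ v, ‖q v‖) * ∫ u in Set.Ioi 0, |densityError p a u| ≤ a / 2) :
    HasFourierBound (fun t => φ t * laplaceTransform (fun u => normalizedPsi p u) (σ + I * t))
      (2 / a * ((|a| + 4 * B) * ∫ u, ‖testFT φ u‖)) := by
  have hG' : IntegrableOn (fun u => (densityError p a u : ℂ)) (Set.Ioi 0) := hG.ofReal
  have hT : Integrable (damped (fun u => normalizedPsi p u) σ) :=
    integrable_damped_iff.2 (laplaceConvergent_normalizedPsi hp hptop hB hσ)
  have hpert := hasFourierBound_perturbed_laplaceTransform_normalizedPsi hp hptop hB hφ hφ' hσ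
  simp only [laplaceTransform_eq_testFT_damped] at hpert ⊢
  refine hpert.of_small_perturbation ha hσ.le (integrable_damped hσ.le hG') hq
    (fun t ht => hqφ t (left_ne_zero_of_mul ht)) (le_trans ?_ hsmall)
    (integrable_mul_testFT hφ hT)
  gcongr
  simpa using integral_norm_damped_le hσ.le hG'

lemma integrable_normalizedPsi_mul_testFT (hp : ∀ k, 1 < p k) (hptop : Tendsto p atTop atTop)
    (hB : ∀ u > 0, (1 + u) * |densityError p a u| ≤ B) {φ : ℝ → ℂ}
    (hφ' : Integrable (testFT φ)) (hφ'' : Integrable fun u => u * testFT φ u) (h : ℝ) :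
    Integrable fun u => normalizedPsi p u * testFT φ (u - h) := by
  have hm := measurable_normalizedPsi hp hptop
  have hlin : Integrable fun u : ℝ => (u : ℂ) * testFT φ (u - h) := by
    refine ((hφ''.comp_sub_right h).add ((hφ'.comp_sub_right h).const_mul h)).congr
      (Eventually.of_forall fun u => ?_)
    simp only [Pi.add_apply]
    push_cast
    ring
  refine (hlin.norm.const_mul (a + B)).mono'
    (AEStronglyMeasurable.mul (by fun_prop) (hφ'.comp_sub_right h).aestronglyMeasurable)
    (Eventually.of_forall fun u => ?_)
  rw [norm_mul, norm_mul, Complex.norm_real, Complex.norm_real, ← mul_assoc]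
  gcongr
  exact abs_normalizedPsi_le hp hptop hB u

lemma integral_normalizedPsi_mul (hp : ∀ k, 1 < p k) (k : ℝ → ℂ) :
    ∫ u, normalizedPsi p u * k u = ∫ u in Set.Ioi 0, normalizedPsi p u * k u := by
  refine (setIntegral_eq_integral_of_forall_compl_eq_zero fun u hu => ?_).symm
  simp [normalizedPsi, beurlingPsi_exp_of_nonpos hp (not_lt.1 hu)]

end DensityError

theorem bounded_convolution_averages_general {p : ℕ → ℝ} (hp : ∀ k, 1 < p k)
    (hptop : Tendsto p atTop atTop) {a : ℝ} (ha : 0 < a)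
    (hL1 : IntegrableOn (fun x : ℝ => ((beurlingN p x : ℝ) - a * x) / x ^ 2) (Set.Ici 1))
    {C : ℝ} (hO : ∀ x : ℝ, 2 ≤ x → |(beurlingN p x : ℝ) - a * x| ≤ C * x / Real.log x) :
    ∃ c K : ℝ, 0 < c ∧ ∀ φ : ℝ → ℂ, Integrable φ → Integrable (testFT φ) →
      Integrable (fun u => u * testFT φ u) → Function.support φ ⊆ Set.Ioo (-c) c →
      ∀ h : ℝ, ‖∫ u, normalizedPsi p u * testFT φ (u - h)‖ ≤ K * ∫ u, ‖testFT φ u‖ := by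
  obtain ⟨B, hB⟩ := exists_one_add_mul_abs_densityError_le hp hptop hO
  have hG := (integrableOn_densityError_iff p a).2 hL1
  obtain ⟨κ, hq⟩ := exists_testFT_eq_self
  set G := ∫ u in Set.Ioi 0, |densityError p a u|
  have hG0 : 0 ≤ G := integral_nonneg fun _ => abs_nonneg _
  have hlt (x : ℝ) : ∀ᶠ y in nhdsWithin 0 (Set.Ioi 0), y * x < a / 4 :=
    tendsto_nhdsWithin_of_tendsto_nhds (continuous_mul_const x).continuousAt
      |>.eventually_lt_const (by simpa using ha)
  obtain ⟨c, hcG, hc : 0 < c⟩ := ((hlt (κ * G)).and self_mem_nhdsWithin).exists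
  obtain ⟨q, hqint, hqle, hqid⟩ := hq c hc
  refine ⟨c, 2 / a * (|a| + 4 * B), hc, fun φ hφ hφ' hφ'' hsupp h => ?_⟩
  rw [integral_normalizedPsi_mul hp, mul_assoc]
  refine norm_setIntegral_mul_testFT_le hφ
    (fun σ hσ => laplaceConvergent_normalizedPsi hp hptop hB hσ)
    (integrable_normalizedPsi_mul_testFT hp hptop hB hφ' hφ'' h).integrableOn ?_
  filter_upwards [hlt G, self_mem_nhdsWithin] with σ hσG hσ
  refine hasFourierBound_mul_laplaceTransform_normalizedPsi hp hptop hB ha hG hφ hφ' hqint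
    (fun t ht => hqid t (abs_lt.2 (hsupp ht))) hσ ?_
  nlinarith

/-- **Lemma 1.** Under the hypotheses of the main theorem, with `T(u) = e^{-u} ψ(e^u)`,
there exists `c > 0` such that for every smooth `φ` supported in `(-c, c)`, the
convolution averages `∫ T(u) φ̂(u - h) du` are uniformly bounded in `h`. -/
theorem bounded_convolution_averages
    (p : ℕ → ℝ) (hmono : Monotone p) (hp1 : 1 < p 0) (hptop : Tendsto p atTop atTop)
    (a : ℝ) (ha : 0 < a)
    (hL1 : IntegrableOn (fun x : ℝ => ((beurlingN p x : ℝ) - a * x) / x ^ 2) (Set.Ici 1))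
    (C : ℝ) (hO : ∀ x : ℝ, 2 ≤ x → |(beurlingN p x : ℝ) - a * x| ≤ C * x / Real.log x) :
    ∃ c : ℝ, 0 < c ∧ ∀ φ : ℝ → ℂ, ContDiff ℝ (⊤ : ℕ∞) φ → tsupport φ ⊆ Set.Ioo (-c) c →
      ∃ M : ℝ, ∀ h : ℝ,
        ‖∫ u : ℝ, (Real.exp (-u) * beurlingPsi p (Real.exp u) : ℝ) * testFT φ (u - h)‖ ≤ M := by
  have hp k : 1 < p k := hp1.trans_le (hmono k.zero_le)
  obtain ⟨c, K, hc, hbound⟩ := bounded_convolution_averages_general hp hptop ha hL1 hO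
  refine ⟨c, hc, fun φ hφ hsupp => ⟨K * ∫ u, ‖testFT φ u‖, ?_⟩⟩
  have hcompact : HasCompactSupport φ := isCompact_Icc.of_isClosed_subset (isClosed_tsupport φ)
    (hsupp.trans Set.Ioo_subset_Icc_self)
  exact hbound φ (hφ.continuous.integrable_of_hasCompactSupport hcompact)
    (by simpa using integrable_pow_mul_testFT hφ hcompact 0)
    (by simpa using integrable_pow_mul_testFT hφ hcompact 1) ((subset_tsupport φ).trans hsupp)
end
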